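/- arXiv:2006.11429 — 2 statements merged into one kernel-verified Lean document; each statement's English description precedes it below -/
import Mathlib

section
/- Fix 1 < α < 2 and γ ≥ ε > 0. For an integer m ≥ 1 let Λ = {1−m, …, m} ⊆ ℤ (a periodic lattice of 2m sites, indices taken mod 2m). For j, k ∈ Λ set J_{j,k} = ∑_{n∈ℤ} |j − k + 2mn|^{−α} if j ≢ k (mod 2m) and J_{j,j} = 0; set N_{j,k} = 1 if j − k ≡ ±1 (mod 2m) and 0 otherwise; and set K_{j,k} = (γ−ε)·N_{j,k} + ε·J_{j,k}. For h : Λ → ℝ define Z(h) = ∑_{σ ∈ {−1,1}^Λ} exp(−(1/2)·∑_{j,k∈Λ} K_{j,k}·(σ_j − σ_k − h_j + h_k)²). Then Gaussian domination holds: Z(h) ≤ Z(0) for every h : Λ → ℝ. -/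
/-- The periodic lattice `Λ = {1−m, …, m}` of `2m` sites, as a type. -/
abbrev Site (m : ℕ) : Type := Finset.Icc (1 - (m : ℤ)) (m : ℤ)

/-- Ising spin configurations `{−1,1}^Λ`. -/
abbrev Spin (m : ℕ) : Type := Site m → ({-1, 1} : Finset ℝ)

/-- Periodized power-law coupling `J_{j,k} = ∑_{n∈ℤ} |j−k+2mn|^{−α}` for
`j ≢ k (mod 2m)`, and `0` for `j ≡ k (mod 2m)`. -/
noncomputable def Jc (α : ℝ) (m : ℕ) (j k : ℤ) : ℝ :=
  if (2 * (m : ℤ)) ∣ (j - k) then 0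
  else ∑' n : ℤ, |(j : ℝ) - (k : ℝ) + 2 * (m : ℝ) * (n : ℝ)| ^ (-α)

/-- Periodic nearest-neighbor indicator: `1` if `j − k ≡ ±1 (mod 2m)`. -/
noncomputable def Nc (m : ℕ) (j k : ℤ) : ℝ :=
  if (2 * (m : ℤ)) ∣ (j - k - 1) ∨ (2 * (m : ℤ)) ∣ (j - k + 1) then 1 else 0

/-- Total coupling `K_{j,k} = (γ−ε)·N_{j,k} + ε·J_{j,k}`. -/
noncomputable def Kc (α γ ε : ℝ) (m : ℕ) (j k : ℤ) : ℝ :=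
  (γ - ε) * Nc m j k + ε * Jc α m j k

/-- The Gaussian-domination partition function
`Z(h) = ∑_{σ∈{−1,1}^Λ} exp(−(1/2)∑_{j,k∈Λ} K_{j,k}(σ_j − σ_k − h_j + h_k)²)`.
Only the values of `h` on `Λ` are used. -/
noncomputable def Zf (α γ ε : ℝ) (m : ℕ) (h : ℤ → ℝ) : ℝ :=
  ∑ σ : Spin m, Real.exp (-(1 / 2) * ∑ j : Site m, ∑ k : Site m,
    Kc α γ ε m (j : ℤ) (k : ℤ) *
      ((σ j : ℝ) - (σ k : ℝ) - h (j : ℤ) + h (k : ℤ)) ^ 2)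


/-- Symmetric positive semidefinite real kernels on a finite type. -/
def PSDk {ι : Type*} [Fintype ι] (M : ι → ι → ℝ) : Prop :=
  (∀ i j, M i j = M j i) ∧ ∀ x : ι → ℝ, 0 ≤ ∑ i, ∑ j, x i * M i j * x j

theorem psdk_iff {ι : Type*} [Fintype ι] (M : ι → ι → ℝ) :
    PSDk M ↔ (Matrix.of M).PosSemidef := by
  classical
  rw [Matrix.posSemidef_iff_dotProduct_mulVec]
  unfold PSDk
  refine and_congr ?_ ?_
  · constructor
    · intro h; ext i j; simp [h i j]
    · intro h i j
      have := congrFun (congrFun h j) i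
      simpa using this
  · refine forall_congr' fun x => ?_
    simp [dotProduct, Matrix.mulVec, Finset.mul_sum, mul_assoc]

theorem PSDk.mul {ι : Type*} [Fintype ι] {M N : ι → ι → ℝ} (hM : PSDk M) (hN : PSDk N) :
    PSDk (fun i j => M i j * N i j) := by
  rw [psdk_iff] at *
  exact hM.hadamard hN

theorem PSDk.one {ι : Type*} [Fintype ι] : PSDk (fun _ _ : ι => (1 : ℝ)) := by
  refine ⟨fun _ _ => rfl, fun x => ?_⟩
  have : ∑ i, ∑ j, x i * 1 * x j = (∑ i, x i) ^ 2 := by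
    rw [sq, Finset.sum_mul_sum]; simp
  rw [this]; positivity

theorem PSDk.pow {ι : Type*} [Fintype ι] {M : ι → ι → ℝ} (hM : PSDk M) (n : ℕ) :
    PSDk (fun i j => M i j ^ n) := by
  induction n with
  | zero => simpa using PSDk.one
  | succ n ih => simpa [pow_succ] using ih.mul hM

theorem PSDk.smul {ι : Type*} [Fintype ι] {M : ι → ι → ℝ} (hM : PSDk M) {c : ℝ} (hc : 0 ≤ c) :
    PSDk (fun i j => c * M i j) := by
  refine ⟨fun i j => by simp only [hM.1 i j], fun x => ?_⟩
  have : ∑ i, ∑ j, x i * (c * M i j) * x j = c * ∑ i, ∑ j, x i * M i j * x j := by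
    simp only [Finset.mul_sum]
    exact Finset.sum_congr rfl fun i _ => Finset.sum_congr rfl fun j _ => by ring
  rw [this]; exact mul_nonneg hc (hM.2 x)

theorem PSDk.add {ι : Type*} [Fintype ι] {M N : ι → ι → ℝ} (hM : PSDk M) (hN : PSDk N) :
    PSDk (fun i j => M i j + N i j) := by
  refine ⟨fun i j => by simp only [hM.1 i j, hN.1 i j], fun x => ?_⟩
  have : ∑ i, ∑ j, x i * (M i j + N i j) * x j
      = (∑ i, ∑ j, x i * M i j * x j) + ∑ i, ∑ j, x i * N i j * x j := by
    simp only [← Finset.sum_add_distrib]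
    exact Finset.sum_congr rfl fun i _ => Finset.sum_congr rfl fun j _ => by ring
  rw [this]; exact add_nonneg (hM.2 x) (hN.2 x)

theorem PSDk.hasSum {ι κ : Type*} [Fintype ι] {M : κ → ι → ι → ℝ} {S : ι → ι → ℝ}
    (hM : ∀ n, PSDk (M n)) (hS : ∀ i j, HasSum (fun n => M n i j) (S i j)) : PSDk S := by
  refine ⟨fun i j => (hS i j).unique ?_, fun x => ?_⟩
  · simpa only [fun n => (hM n).1 i j] using hS j i
  · have : HasSum (fun n => ∑ i, ∑ j, x i * M n i j * x j) (∑ i, ∑ j, x i * S i j * x j) :=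
      hasSum_sum fun i _ => hasSum_sum fun j _ => ((hS i j).mul_left _).mul_right _
    exact this.nonneg fun n => (hM n).2 x

theorem PSDk.exp {ι : Type*} [Fintype ι] {M : ι → ι → ℝ} (hM : PSDk M) :
    PSDk (fun i j => Real.exp (M i j)) := by
  refine PSDk.hasSum (M := fun (n : ℕ) i j => ((n.factorial : ℝ)⁻¹) * M i j ^ n)
    (fun n => (hM.pow n).smul (by positivity)) fun i j => ?_
  have := NormedSpace.expSeries_div_hasSum_exp (M i j)
  rw [← Real.exp_eq_exp_ℝ] at this
  simpa [div_eq_inv_mul] using this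

/-- Pull back a bilinear form to vectors. -/
theorem PSDk.comp {A ι : Type*} [Fintype A] [Fintype ι] {C : A → A → ℝ} (hC : PSDk C)
    (V : ι → A → ℝ) : PSDk (fun i j => ∑ a, ∑ b, V i a * C a b * V j b) := by
  refine ⟨fun i j => ?_, fun x => ?_⟩
  · beta_reduce
    rw [Finset.sum_comm]
    exact Finset.sum_congr rfl fun i _ => Finset.sum_congr rfl fun j _ => by rw [hC.1]; ring
  · have := hC.2 (fun a => ∑ i, x i * V i a)
    convert this using 1
    simp only [Finset.mul_sum, Finset.sum_mul]
    have h1 : ∀ i, ∑ j, ∑ a, ∑ b, x i * (V i a * C a b * V j b) * x j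
        = ∑ a, ∑ b, ∑ j, x i * (V i a * C a b * V j b) * x j := by
      intro i
      rw [Finset.sum_comm]
      exact Finset.sum_congr rfl fun a _ => Finset.sum_comm
    simp only [h1]
    rw [Finset.sum_comm]
    refine Finset.sum_congr rfl fun a _ => ?_
    rw [Finset.sum_comm]
    refine Finset.sum_congr rfl fun b _ => ?_
    rw [Finset.sum_comm]
    refine Finset.sum_congr rfl fun i _ => Finset.sum_congr rfl fun j _ => by ring

theorem PSDk.rpow {ι : Type*} [Fintype ι] {α : ℝ} (hα : 0 < α) (p : ι → ℝ)
    (hp : ∀ i j, 0 < p i + p j) : PSDk (fun i j => (p i + p j) ^ (-α)) := by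
  refine ⟨fun i j => by simp only [add_comm], fun x => ?_⟩
  have hI : ∀ i j, MeasureTheory.IntegrableOn
      (fun t : ℝ => t ^ (α - 1) * Real.exp (-((p i + p j) * t))) (Set.Ioi 0) := by
    intro i j
    have := integrableOn_rpow_mul_exp_neg_mul_rpow (p := 1) (s := α - 1) (by linarith) one_pos
      (hp i j)
    simpa only [Real.rpow_one, neg_mul] using this
  have hE : ∀ i j, (p i + p j) ^ (-α) = (Real.Gamma α)⁻¹ *
      ∫ t in Set.Ioi (0 : ℝ), t ^ (α - 1) * Real.exp (-((p i + p j) * t)) := by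
    intro i j
    rw [Real.integral_rpow_mul_exp_neg_mul_Ioi hα (hp i j), one_div,
      Real.inv_rpow (hp i j).le, Real.rpow_neg (hp i j).le]
    have := (Real.Gamma_pos_of_pos hα).ne'
    field_simp
  have key : ∑ i, ∑ j, x i * (p i + p j) ^ (-α) * x j = (Real.Gamma α)⁻¹ *
      ∫ t in Set.Ioi (0 : ℝ), ∑ i, ∑ j, x i * x j *
        (t ^ (α - 1) * Real.exp (-((p i + p j) * t))) := by
    rw [MeasureTheory.integral_finsetSum _ fun i _ =>
      MeasureTheory.integrable_finsetSum _ fun j _ => (hI i j).const_mul _]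
    rw [Finset.mul_sum]
    refine Finset.sum_congr rfl fun i _ => ?_
    rw [MeasureTheory.integral_finsetSum _ fun j _ => (hI i j).const_mul _]
    rw [Finset.mul_sum]
    refine Finset.sum_congr rfl fun j _ => ?_
    rw [MeasureTheory.integral_const_mul, hE]
    ring
  rw [key]
  refine mul_nonneg (inv_nonneg.2 (Real.Gamma_pos_of_pos hα).le) ?_
  refine MeasureTheory.setIntegral_nonneg measurableSet_Ioi fun t ht => ?_
  have : ∑ i, ∑ j, x i * x j * (t ^ (α - 1) * Real.exp (-((p i + p j) * t)))
      = t ^ (α - 1) * (∑ i, x i * Real.exp (-(p i * t))) ^ 2 := by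
    rw [sq, Finset.sum_mul_sum, Finset.mul_sum]
    refine Finset.sum_congr rfl fun i _ => ?_
    rw [Finset.mul_sum]
    refine Finset.sum_congr rfl fun j _ => ?_
    rw [add_mul, neg_add, Real.exp_add]; ring
  rw [this]
  exact mul_nonneg (Real.rpow_nonneg (le_of_lt ht) _) (sq_nonneg _)

/-- Generic partition function. -/
noncomputable def Zg {Λ S : Type*} [Fintype Λ] [DecidableEq Λ] [Fintype S] (val : S → ℝ)
    (K : Λ → Λ → ℝ) (h : Λ → ℝ) : ℝ :=
  ∑ σ : Λ → S, Real.exp (-(1 / 2) * ∑ j, ∑ k,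
    K j k * (val (σ j) - val (σ k) - h j + h k) ^ 2)

theorem Zg_equiv {Λ Λ' S : Type*} [Fintype Λ] [DecidableEq Λ] [Fintype Λ'] [DecidableEq Λ']
    [Fintype S] (val : S → ℝ) (e : Λ' ≃ Λ) (K : Λ → Λ → ℝ) (h : Λ → ℝ) :
    Zg val (fun i j => K (e i) (e j)) (fun i => h (e i)) = Zg val K h := by
  unfold Zg
  refine Fintype.sum_equiv (Equiv.arrowCongr e (Equiv.refl S)) _ _ fun σ => ?_
  congr 2
  rw [← Equiv.sum_comp e]
  refine Finset.sum_congr rfl fun i _ => ?_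
  rw [← Equiv.sum_comp e]
  refine Finset.sum_congr rfl fun j _ => ?_
  simp

/-- Half-lattice weight. -/
noncomputable def Wg {A : Type*} [Fintype A] (I C : A → A → ℝ) (φ : A → ℝ) : ℝ :=
  Real.exp (-(1 / 2) * (∑ a, ∑ b, I a b * (φ a - φ b) ^ 2) - ∑ a, ∑ b, C a b * φ a ^ 2)

theorem energy_split {A : Type*} [Fintype A] (K : A ⊕ A → A ⊕ A → ℝ) (C : A → A → ℝ)
    (hC : PSDk C) (hrr : ∀ a b, K (Sum.inr a) (Sum.inr b) = K (Sum.inl a) (Sum.inl b))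
    (hlr : ∀ a b, K (Sum.inl a) (Sum.inr b) = C a b)
    (hrl : ∀ a b, K (Sum.inr a) (Sum.inl b) = C a b) (Φ : A ⊕ A → ℝ) :
    Real.exp (-(1 / 2) * ∑ j, ∑ k, K j k * (Φ j - Φ k) ^ 2)
      = Wg (fun a b => K (Sum.inl a) (Sum.inl b)) C (fun a => Φ (Sum.inl a))
        * Wg (fun a b => K (Sum.inl a) (Sum.inl b)) C (fun a => Φ (Sum.inr a))
        * Real.exp (2 * ∑ a, ∑ b, Φ (Sum.inl a) * C a b * Φ (Sum.inr b)) := by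
  unfold Wg
  rw [← Real.exp_add, ← Real.exp_add]
  congr 1
  simp only [Fintype.sum_sum_type, hrr, hlr, hrl, Finset.sum_add_distrib]
  have e1 : ∑ a, ∑ b, C a b * (Φ (Sum.inl a) - Φ (Sum.inr b)) ^ 2
      = (∑ a, ∑ b, C a b * Φ (Sum.inl a) ^ 2) + (∑ a, ∑ b, C a b * Φ (Sum.inr b) ^ 2)
        - 2 * ∑ a, ∑ b, Φ (Sum.inl a) * C a b * Φ (Sum.inr b) := by
    simp only [Finset.mul_sum, ← Finset.sum_add_distrib, ← Finset.sum_sub_distrib]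
    exact Finset.sum_congr rfl fun i _ => Finset.sum_congr rfl fun j _ => by ring
  have e2 : ∑ a, ∑ b, C a b * (Φ (Sum.inr a) - Φ (Sum.inl b)) ^ 2
      = ∑ a, ∑ b, C a b * (Φ (Sum.inl a) - Φ (Sum.inr b)) ^ 2 := by
    rw [Finset.sum_comm]
    exact Finset.sum_congr rfl fun i _ => Finset.sum_congr rfl fun j _ => by rw [hC.1]; ring
  have e3 : ∑ a, ∑ b, C a b * Φ (Sum.inr b) ^ 2 = ∑ a, ∑ b, C a b * Φ (Sum.inr a) ^ 2 := by
    rw [Finset.sum_comm]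
    exact Finset.sum_congr rfl fun i _ => Finset.sum_congr rfl fun j _ => by rw [hC.1]
  rw [e2, e1, e3]
  ring

theorem Zg_split {A S : Type*} [Fintype A] [DecidableEq A] [Fintype S] (val : S → ℝ)
    (K : A ⊕ A → A ⊕ A → ℝ) (C : A → A → ℝ)
    (hC : PSDk C) (hrr : ∀ a b, K (Sum.inr a) (Sum.inr b) = K (Sum.inl a) (Sum.inl b))
    (hlr : ∀ a b, K (Sum.inl a) (Sum.inr b) = C a b)
    (hrl : ∀ a b, K (Sum.inr a) (Sum.inl b) = C a b) (u v : A → ℝ) :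
    Zg val K (Sum.elim u v) = ∑ s : A → S, ∑ t : A → S,
      Wg (fun a b => K (Sum.inl a) (Sum.inl b)) C (fun a => val (s a) - u a)
        * Wg (fun a b => K (Sum.inl a) (Sum.inl b)) C (fun a => val (t a) - v a)
        * Real.exp (2 * ∑ a, ∑ b, (val (s a) - u a) * C a b * (val (t b) - v b)) := by
  unfold Zg
  rw [← Fintype.sum_prod_type']
  refine Fintype.sum_equiv (Equiv.sumArrowEquivProdArrow A A S) _ _ fun σ => ?_
  have := energy_split K C hC hrr hlr hrl (fun j => val (σ j) - Sum.elim u v j)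
  simp only [Sum.elim_inl, Sum.elim_inr] at this
  simp only [Equiv.sumArrowEquivProdArrow, Equiv.coe_fn_mk, Function.comp_apply]
  rw [← this]
  congr 2
  exact Finset.sum_congr rfl fun i _ => Finset.sum_congr rfl fun j _ => by ring

theorem Zg_RP {A S : Type*} [Fintype A] [DecidableEq A] [Fintype S] (val : S → ℝ)
    (K : A ⊕ A → A ⊕ A → ℝ) (C : A → A → ℝ)
    (hC : PSDk C) (hrr : ∀ a b, K (Sum.inr a) (Sum.inr b) = K (Sum.inl a) (Sum.inl b))
    (hlr : ∀ a b, K (Sum.inl a) (Sum.inr b) = C a b)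
    (hrl : ∀ a b, K (Sum.inr a) (Sum.inl b) = C a b) (u v : A → ℝ) :
    2 * Zg val K (Sum.elim u v) ≤ Zg val K (Sum.elim u u) + Zg val K (Sum.elim v v) := by
  have hs := Zg_split val K C hC hrr hlr hrl
  have hsym : Zg val K (Sum.elim v u) = Zg val K (Sum.elim u v) := by
    rw [hs, hs, Finset.sum_comm]
    refine Finset.sum_congr rfl fun s _ => Finset.sum_congr rfl fun t _ => ?_
    have : ∑ a, ∑ b, (val (t a) - v a) * C a b * (val (s b) - u b)
        = ∑ a, ∑ b, (val (s a) - u a) * C a b * (val (t b) - v b) := by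
      rw [Finset.sum_comm]
      exact Finset.sum_congr rfl fun i _ => Finset.sum_congr rfl fun j _ => by rw [hC.1]; ring
    rw [this]; ring
  let V : (A → S) ⊕ (A → S) → A → ℝ :=
    Sum.elim (fun s a => val (s a) - u a) (fun t a => val (t a) - v a)
  have hP := ((hC.comp V).smul (c := 2) (by norm_num)).exp
  let W := Wg (fun a b => K (Sum.inl a) (Sum.inl b)) C
  have := hP.2 (Sum.elim (fun s => W (V (Sum.inl s))) (fun t => - W (V (Sum.inr t))))
  simp only [Fintype.sum_sum_type, Sum.elim_inl, Sum.elim_inr, Finset.sum_add_distrib, V] at this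
  have h1 := hs u u
  have h2 := hs v v
  have h3 := hs u v
  have h4 := hs v u
  rw [hsym] at h4
  have g1 : Zg val K (Sum.elim u u) = ∑ s : A → S, ∑ t : A → S,
      W (fun a => val (s a) - u a) *
        Real.exp (2 * ∑ a, ∑ b, (val (s a) - u a) * C a b * (val (t b) - u b)) *
        W (fun a => val (t a) - u a) := by
    rw [h1]; exact Finset.sum_congr rfl fun i _ => Finset.sum_congr rfl fun j _ => by ring
  have g2 : Zg val K (Sum.elim v v) = ∑ s : A → S, ∑ t : A → S,
      -W (fun a => val (s a) - v a) *
        Real.exp (2 * ∑ a, ∑ b, (val (s a) - v a) * C a b * (val (t b) - v b)) *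
        -W (fun a => val (t a) - v a) := by
    rw [h2]; exact Finset.sum_congr rfl fun i _ => Finset.sum_congr rfl fun j _ => by ring
  have g3 : -Zg val K (Sum.elim u v) = ∑ s : A → S, ∑ t : A → S,
      W (fun a => val (s a) - u a) *
        Real.exp (2 * ∑ a, ∑ b, (val (s a) - u a) * C a b * (val (t b) - v b)) *
        -W (fun a => val (t a) - v a) := by
    rw [h3]; simp only [← Finset.sum_neg_distrib]
    exact Finset.sum_congr rfl fun i _ => Finset.sum_congr rfl fun j _ => by ring
  have g4 : -Zg val K (Sum.elim u v) = ∑ s : A → S, ∑ t : A → S,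
      -W (fun a => val (s a) - v a) *
        Real.exp (2 * ∑ a, ∑ b, (val (s a) - v a) * C a b * (val (t b) - u b)) *
        W (fun a => val (t a) - u a) := by
    rw [h4]; simp only [← Finset.sum_neg_distrib]
    exact Finset.sum_congr rfl fun i _ => Finset.sum_congr rfl fun j _ => by ring
  rw [← g1, ← g2, ← g3, ← g4] at this
  linarith

/-- Parametrization of the ring by two mirror halves around the bond `(a, a+1)`. -/
def halfMap (m : ℕ) (a : ZMod (2 * m)) : Fin m ⊕ Fin m → ZMod (2 * m) :=
  Sum.elim (fun i => a + 1 + ((i : ℕ) : ZMod (2 * m))) (fun i => a - ((i : ℕ) : ZMod (2 * m)))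

theorem halfMap_bij (m : ℕ) [NeZero (2 * m)] (a : ZMod (2 * m)) :
    Function.Bijective (halfMap m a) := by
  rw [Fintype.bijective_iff_injective_and_card]
  have key : ∀ i j : Fin m, ((i : ℕ) : ZMod (2 * m)) = ((j : ℕ) : ZMod (2 * m)) → i = j := by
    intro i j hij
    rw [ZMod.natCast_eq_natCast_iff', Nat.mod_eq_of_lt (by omega), Nat.mod_eq_of_lt (by omega)]
      at hij
    exact Fin.ext hij
  have key2 : ∀ i j : Fin m, ¬ (a + 1 + ((i : ℕ) : ZMod (2 * m)) = a - ((j : ℕ) : ZMod (2 * m))) := by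
    intro i j hij
    have : ((1 + (i : ℕ) + (j : ℕ) : ℕ) : ZMod (2 * m)) = 0 := by
      push_cast
      linear_combination hij
    rw [ZMod.natCast_eq_zero_iff] at this
    have := Nat.le_of_dvd (by omega) this
    omega
  refine ⟨?_, ?_⟩
  · rintro (i | i) (j | j) hij <;> simp only [halfMap, Sum.elim_inl, Sum.elim_inr] at hij
    · rw [key i j (by linear_combination hij)]
    · exact (key2 i j hij).elim
    · exact (key2 j i hij.symm).elim
    · rw [key i j (by linear_combination -hij)]
  · simp [ZMod.card]; omega

/-- Number of unequal bonds. -/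
noncomputable def Nb (m : ℕ) [NeZero (2 * m)] (g : ZMod (2 * m) → ℝ) : ℕ :=
  open Classical in ∑ x, if g x = g (x + 1) then 0 else 1

open Classical in
theorem Nb_half (k : ℕ) (a : ZMod (2 * (k + 1))) (g : ZMod (2 * (k + 1)) → ℝ)
    (u w : ℕ → ℝ) (hu : ∀ i < k + 1, g (a + 1 + (i : ZMod (2 * (k + 1)))) = u i)
    (hw : ∀ i < k + 1, g (a - (i : ZMod (2 * (k + 1)))) = w i) :
    Nb (k + 1) g = (∑ i ∈ Finset.range k, if u i = u (i + 1) then 0 else 1)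
      + (if u k = w k then 0 else 1)
      + ((∑ i ∈ Finset.range k, if w i = w (i + 1) then 0 else 1)
      + (if u 0 = w 0 then 0 else 1)) := by
  have hz : (2 * ((k : ZMod (2 * (k + 1))) + 1)) = 0 := by
    have := ZMod.natCast_self (2 * (k + 1))
    push_cast at this
    exact this
  unfold Nb
  rw [← Equiv.sum_comp (Equiv.ofBijective _ (halfMap_bij (k + 1) a)), Fintype.sum_sum_type]
  simp only [Equiv.ofBijective_apply, halfMap, Sum.elim_inl, Sum.elim_inr]
  rw [Fin.sum_univ_eq_sum_range (fun i : ℕ => if g (a + 1 + (i : ZMod (2 * (k + 1)))) =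
      g (a + 1 + (i : ZMod (2 * (k + 1))) + 1) then 0 else 1),
    Fin.sum_univ_eq_sum_range (fun i : ℕ => if g (a - (i : ZMod (2 * (k + 1)))) =
      g (a - (i : ZMod (2 * (k + 1))) + 1) then 0 else 1),
    Finset.sum_range_succ, Finset.sum_range_succ']
  congr 1
  · congr 1
    · refine Finset.sum_congr rfl fun i hi => ?_
      have hi := Finset.mem_range.1 hi
      rw [hu i (by omega), ← hu (i + 1) (by omega)]
      push_cast
      rw [add_assoc (a + 1)]
    · rw [hu k (by omega), ← hw k (by omega)]
      have : a + 1 + (k : ZMod (2 * (k + 1))) + 1 = a - (k : ZMod (2 * (k + 1))) := by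
        linear_combination hz
      rw [this]
  · congr 1
    · refine Finset.sum_congr rfl fun i hi => ?_
      have hi := Finset.mem_range.1 hi
      rw [hw (i + 1) (by omega), ← hw i (by omega)]
      have : a - ((i + 1 : ℕ) : ZMod (2 * (k + 1))) + 1 = a - (i : ZMod (2 * (k + 1))) := by
        push_cast; ring
      rw [this]
      simp only [eq_comm]
    · rw [hw 0 (by omega), ← hu 0 (by omega)]
      have : a - ((0 : ℕ) : ZMod (2 * (k + 1))) + 1 = a + 1 + ((0 : ℕ) : ZMod (2 * (k + 1))) := by
        push_cast; ring
      rw [this]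
      simp only [eq_comm]

theorem ring_step {S : Type*} [Fintype S] (val : S → ℝ) (k : ℕ) (f : ZMod (2 * (k + 1)) → ℝ)
    (hf : ∀ x, f (-x) = f x)
    (hC : PSDk (fun i j : Fin (k + 1) =>
      f (1 + ((i : ℕ) : ZMod (2 * (k + 1))) + ((j : ℕ) : ZMod (2 * (k + 1))))))
    (g : ZMod (2 * (k + 1)) → ℝ) (a : ZMod (2 * (k + 1))) (hne : g a ≠ g (a + 1)) :
    ∃ g₁ g₂ : ZMod (2 * (k + 1)) → ℝ, (∀ x, ∃ y, g₁ x = g y) ∧ (∀ x, ∃ y, g₂ x = g y) ∧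
      2 * Zg val (fun x y => f (x - y)) g ≤
        Zg val (fun x y => f (x - y)) g₁ + Zg val (fun x y => f (x - y)) g₂ ∧
      Nb (k + 1) g₁ + Nb (k + 1) g₂ < 2 * Nb (k + 1) g := by
  classical
  let e := Equiv.ofBijective _ (halfMap_bij (k + 1) a)
  let u : ℕ → ℝ := fun i => g (a + 1 + (i : ZMod (2 * (k + 1))))
  let w : ℕ → ℝ := fun i => g (a - (i : ZMod (2 * (k + 1))))
  let G : (ℕ → ℝ) → (ℕ → ℝ) → ZMod (2 * (k + 1)) → ℝ := fun p q x =>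
    Sum.elim (fun i : Fin (k + 1) => p i) (fun i : Fin (k + 1) => q i) (e.symm x)
  have hGe : ∀ p q s, G p q (e s) =
      Sum.elim (fun i : Fin (k + 1) => p i) (fun i : Fin (k + 1) => q i) s := by
    intro p q s; simp only [G, Equiv.symm_apply_apply]
  have hGl : ∀ p q, ∀ i < k + 1, G p q (a + 1 + (i : ZMod (2 * (k + 1)))) = p i :=
    fun p q i hi => hGe p q (Sum.inl ⟨i, hi⟩)
  have hGr : ∀ p q, ∀ i < k + 1, G p q (a - (i : ZMod (2 * (k + 1)))) = q i :=
    fun p q i hi => hGe p q (Sum.inr ⟨i, hi⟩)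
  have hg : G u w = g := by
    funext x
    obtain ⟨s, rfl⟩ := e.surjective x
    rw [hGe]
    rcases s with i | i <;> rfl
  have hZ : ∀ p q, Zg val (fun x y => f (x - y)) (G p q) =
      Zg val (fun s t => f (e s - e t)) (Sum.elim (fun i : Fin (k + 1) => p i) (fun i => q i)) := by
    intro p q
    rw [← Zg_equiv val e (fun x y => f (x - y)) (G p q)]
    simp only [hGe]
  refine ⟨G u u, G w w, ?_, ?_, ?_, ?_⟩
  · intro x
    rcases hx : e.symm x with i | i
    · exact ⟨a + 1 + ((i : ℕ) : ZMod (2 * (k + 1))), by simp only [G, hx]; rfl⟩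
    · exact ⟨a + 1 + ((i : ℕ) : ZMod (2 * (k + 1))), by simp only [G, hx]; rfl⟩
  · intro x
    rcases hx : e.symm x with i | i
    · exact ⟨a - ((i : ℕ) : ZMod (2 * (k + 1))), by simp only [G, hx]; rfl⟩
    · exact ⟨a - ((i : ℕ) : ZMod (2 * (k + 1))), by simp only [G, hx]; rfl⟩
  · conv_lhs => rw [← hg]
    rw [hZ, hZ, hZ]
    refine Zg_RP val _ _ hC ?_ ?_ ?_ _ _
    · intro i j
      change f ((a - ((i : ℕ) : ZMod (2 * (k + 1)))) - (a - ((j : ℕ) : ZMod (2 * (k + 1)))))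
        = f ((a + 1 + ((i : ℕ) : ZMod (2 * (k + 1)))) - (a + 1 + ((j : ℕ) : ZMod (2 * (k + 1)))))
      rw [← hf]; congr 1; ring
    · intro i j
      change f ((a + 1 + ((i : ℕ) : ZMod (2 * (k + 1)))) - (a - ((j : ℕ) : ZMod (2 * (k + 1))))) = _
      congr 1; ring
    · intro i j
      change f ((a - ((i : ℕ) : ZMod (2 * (k + 1)))) - (a + 1 + ((j : ℕ) : ZMod (2 * (k + 1))))) = _
      rw [← hf]; congr 1; ring
  · rw [Nb_half k a (G u u) u u (hGl u u) (hGr u u), Nb_half k a (G w w) w w (hGl w w) (hGr w w),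
      Nb_half k a g u w (fun _ _ => rfl) (fun _ _ => rfl)]
    have h0 : u 0 ≠ w 0 := by
      simp only [u, w, Nat.cast_zero, add_zero, sub_zero]; exact hne.symm
    simp only [if_true, if_neg h0]
    omega

theorem ring_domination {S : Type*} [Fintype S] (val : S → ℝ) (k : ℕ) (f : ZMod (2 * (k + 1)) → ℝ)
    (hf : ∀ x, f (-x) = f x)
    (hC : PSDk (fun i j : Fin (k + 1) =>
      f (1 + ((i : ℕ) : ZMod (2 * (k + 1))) + ((j : ℕ) : ZMod (2 * (k + 1))))))
    (h : ZMod (2 * (k + 1)) → ℝ) :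
    Zg val (fun x y => f (x - y)) h ≤ Zg val (fun x y => f (x - y)) (fun _ => 0) := by
  classical
  let T : Finset (ZMod (2 * (k + 1)) → ℝ) := Fintype.piFinset fun _ => Finset.univ.image h
  have hT : ∀ g, g ∈ T ↔ ∀ x, ∃ y, h y = g x := by
    intro g; simp [T, Fintype.mem_piFinset]
  have hhT : h ∈ T := (hT h).2 fun x => ⟨x, rfl⟩
  obtain ⟨g₀, hg₀T, hg₀⟩ := T.exists_max_image (Zg val (fun x y => f (x - y))) ⟨h, hhT⟩
  let T' := T.filter fun g => Zg val (fun x y => f (x - y)) g = Zg val (fun x y => f (x - y)) g₀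
  obtain ⟨g, hgT', hgmin⟩ := T'.exists_min_image (Nb (k + 1))
    ⟨g₀, Finset.mem_filter.2 ⟨hg₀T, rfl⟩⟩
  obtain ⟨hgT, hgZ⟩ := Finset.mem_filter.1 hgT'
  have hconst : ∀ a, g a = g (a + 1) := by
    intro a
    by_contra hne
    obtain ⟨g₁, g₂, h1, h2, hZ, hN⟩ := ring_step val k f hf hC g a hne
    have m1 : g₁ ∈ T := (hT _).2 fun x => by
      obtain ⟨y, hy⟩ := h1 x
      rw [hy]; exact (hT g).1 hgT y
    have m2 : g₂ ∈ T := (hT _).2 fun x => by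
      obtain ⟨y, hy⟩ := h2 x
      rw [hy]; exact (hT g).1 hgT y
    have z1 := hg₀ _ m1
    have z2 := hg₀ _ m2
    have n1 := hgmin g₁ (Finset.mem_filter.2 ⟨m1, by linarith⟩)
    have n2 := hgmin g₂ (Finset.mem_filter.2 ⟨m2, by linarith⟩)
    omega
  have hc : ∀ n : ℕ, g (n : ZMod (2 * (k + 1))) = g 0 := by
    intro n
    induction n with
    | zero => simp
    | succ n ih => rw [Nat.cast_succ, ← hconst, ih]
  have hc' : ∀ x, g x = g 0 := fun x => by rw [← ZMod.natCast_zmod_val x, hc]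
  calc Zg val (fun x y => f (x - y)) h ≤ Zg val (fun x y => f (x - y)) g₀ := hg₀ _ hhT
    _ = Zg val (fun x y => f (x - y)) g := hgZ.symm
    _ = _ := by
      unfold Zg
      simp only [hc', sub_add_cancel, sub_zero, add_zero]

theorem Kc_sub (α γ ε : ℝ) (m : ℕ) (j k : ℤ) : Kc α γ ε m j k = Kc α γ ε m (j - k) 0 := by
  simp [Kc, Nc, Jc]

theorem Kc_neg (α γ ε : ℝ) (m : ℕ) (d : ℤ) : Kc α γ ε m (-d) 0 = Kc α γ ε m d 0 := by
  have hN : Nc m (-d) 0 = Nc m d 0 := by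
    have h1 : (2 * (m : ℤ)) ∣ (-d - 0 - 1) ↔ (2 * (m : ℤ)) ∣ (d - 0 + 1) := by
      rw [← dvd_neg]; ring_nf
    have h2 : (2 * (m : ℤ)) ∣ (-d - 0 + 1) ↔ (2 * (m : ℤ)) ∣ (d - 0 - 1) := by
      rw [← dvd_neg]; ring_nf
    unfold Nc
    simp only [h1, h2]
    exact if_congr or_comm rfl rfl
  have hJ : Jc α m (-d) 0 = Jc α m d 0 := by
    have h1 : (2 * (m : ℤ)) ∣ (-d - 0) ↔ (2 * (m : ℤ)) ∣ (d - 0) := by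
      rw [← dvd_neg]; ring_nf
    unfold Jc
    simp only [h1]
    congr 1
    rw [← Equiv.tsum_eq (Equiv.neg ℤ)]
    refine tsum_congr fun n => ?_
    rw [← abs_neg]
    congr 2
    simp only [Equiv.neg_apply]
    push_cast; ring
  simp only [Kc, hN, hJ]

theorem Kc_period (α γ ε : ℝ) (m : ℕ) (d t : ℤ) :
    Kc α γ ε m (d + 2 * m * t) 0 = Kc α γ ε m d 0 := by
  have hd : ∀ c : ℤ, (2 * (m : ℤ)) ∣ (c + 2 * m * t) ↔ (2 * (m : ℤ)) ∣ c := fun c =>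
    (Int.dvd_add_left (Dvd.intro t rfl))
  have hN : Nc m (d + 2 * m * t) 0 = Nc m d 0 := by
    unfold Nc
    refine if_congr (or_congr ?_ ?_) rfl rfl
    · rw [← hd (d - 0 - 1)]; ring_nf
    · rw [← hd (d - 0 + 1)]; ring_nf
  have hJ : Jc α m (d + 2 * m * t) 0 = Jc α m d 0 := by
    unfold Jc
    have h1 : (2 * (m : ℤ)) ∣ (d + 2 * m * t - 0) ↔ (2 * (m : ℤ)) ∣ (d - 0) := by
      rw [← hd (d - 0)]; ring_nf
    simp only [h1]
    congr 1
    rw [← Equiv.tsum_eq (Equiv.addRight t)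
      (fun n : ℤ => |(d : ℝ) - ((0 : ℤ) : ℝ) + 2 * (m : ℝ) * (n : ℝ)| ^ (-α))]
    refine tsum_congr fun n => ?_
    congr 2
    simp only [Equiv.coe_addRight]
    push_cast; ring
  simp only [Kc, hN, hJ]

theorem summable_J (α : ℝ) (hα : 1 < α) (m : ℕ) (hm : 1 ≤ m) (d : ℤ) :
    Summable fun n : ℤ => |(d : ℝ) + 2 * (m : ℝ) * (n : ℝ)| ^ (-α) := by
  have hinj : Function.Injective fun n : ℤ => d + 2 * (m : ℤ) * n := by
    intro a b hab
    have h2 : (2 * (m : ℤ)) ≠ 0 := by omega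
    exact mul_left_cancel₀ h2 (add_left_cancel hab)
  have := (Real.summable_abs_int_rpow hα).comp_injective hinj
  refine this.congr fun n => ?_
  simp

theorem psdk_N (k : ℕ) :
    PSDk (fun i j : Fin (k + 1) => Nc (k + 1) (1 + ((i : ℕ) : ℤ) + ((j : ℕ) : ℤ)) 0) := by
  have hd : ∀ i j : Fin (k + 1), Nc (k + 1) (1 + ((i : ℕ) : ℤ) + ((j : ℕ) : ℤ)) 0
      = if i = j then (if (i : ℕ) = 0 ∨ (i : ℕ) = k then 1 else 0) else 0 := by
    intro i j
    have hi := i.2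
    have hj := j.2
    rw [← ite_and]
    unfold Nc
    congr 1
    rw [eq_iff_iff]
    constructor
    · rintro (h | h)
      · have h0 := Int.eq_zero_of_abs_lt_dvd h (by rw [abs_lt]; push_cast; omega)
        exact ⟨Fin.ext (by omega), by omega⟩
      · obtain ⟨c, hc⟩ := h
        have : c = 1 := by
          push_cast at hc
          have h1 : 0 < c := by
            by_contra hcon
            nlinarith
          have h2 : c < 2 := by
            by_contra hcon
            nlinarith
          omega
        subst this
        push_cast at hc
        exact ⟨Fin.ext (by omega), by omega⟩
    · rintro ⟨rfl, h | h⟩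
      · left; simp [h]
      · right; rw [h]; push_cast; exact ⟨1, by ring⟩
  simp only [hd]
  refine ⟨fun i j => ?_, fun x => Finset.sum_nonneg fun i _ => ?_⟩
  · by_cases h : i = j
    · subst h; rfl
    · simp [h, Ne.symm h]
  · simp only [mul_ite, ite_mul, mul_zero, zero_mul, Finset.sum_ite_eq, Finset.mem_univ, if_true]
    split_ifs
    · nlinarith [sq_nonneg (x i)]
    · exact le_rfl

theorem psdk_J (α : ℝ) (hα : 1 < α) (k : ℕ) :
    PSDk (fun i j : Fin (k + 1) => Jc α (k + 1) (1 + ((i : ℕ) : ℤ) + ((j : ℕ) : ℤ)) 0) := by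
  refine PSDk.hasSum (M := fun (n : ℤ) (i j : Fin (k + 1)) =>
    |((1 + ((i : ℕ) : ℤ) + ((j : ℕ) : ℤ) : ℤ) : ℝ) + 2 * ((k + 1 : ℕ) : ℝ) * (n : ℝ)| ^ (-α)) ?_ ?_
  · intro n
    rcases le_or_gt 0 n with hn | hn
    · have hn' : (0 : ℝ) ≤ n := by exact_mod_cast hn
      have := PSDk.rpow (α := α) (by linarith)
        (fun i : Fin (k + 1) => 1 / 2 + ((i : ℕ) : ℝ) + ((k + 1 : ℕ) : ℝ) * (n : ℝ))
        (fun i j => by positivity)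
      convert this using 4 with i j
      rw [abs_of_nonneg (by push_cast; positivity)]
      push_cast; ring
    · have hn' : (n : ℝ) ≤ -1 := by exact_mod_cast (by omega : n ≤ -1)
      have hneg : ∀ i j : Fin (k + 1), 1 + ((i : ℕ) : ℝ) + ((j : ℕ) : ℝ)
          + 2 * ((k + 1 : ℕ) : ℝ) * (n : ℝ) < 0 := by
        intro i j
        have hi : ((i : ℕ) : ℝ) ≤ k := by exact_mod_cast (by omega : (i : ℕ) ≤ k)
        have hj : ((j : ℕ) : ℝ) ≤ k := by exact_mod_cast (by omega : (j : ℕ) ≤ k)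
        have hk : (0 : ℝ) ≤ k := by positivity
        push_cast
        nlinarith
      have := PSDk.rpow (α := α) (by linarith)
        (fun i : Fin (k + 1) => -(1 / 2 + ((i : ℕ) : ℝ) + ((k + 1 : ℕ) : ℝ) * (n : ℝ)))
        (fun i j => by have := hneg i j; linarith)
      convert this using 4 with i j
      rw [abs_of_neg (by have := hneg i j; push_cast at this ⊢; linarith)]
      push_cast; ring
  · intro i j
    have hnd : ¬ (2 * ((k + 1 : ℕ) : ℤ)) ∣ (1 + ((i : ℕ) : ℤ) + ((j : ℕ) : ℤ) - 0) := by
      intro h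
      have hi := i.2
      have hj := j.2
      have h0 := Int.eq_zero_of_abs_lt_dvd h (by rw [abs_lt]; push_cast; omega)
      omega
    unfold Jc
    rw [if_neg hnd]
    simp only [Int.cast_zero, sub_zero]
    exact (summable_J α hα (k + 1) (by omega) _).hasSum

theorem psdk_K (α γ ε : ℝ) (hα : 1 < α) (hε : 0 < ε) (hγε : ε ≤ γ) (k : ℕ) :
    PSDk (fun i j : Fin (k + 1) =>
      Kc α γ ε (k + 1) (1 + ((i : ℕ) : ℤ) + ((j : ℕ) : ℤ)) 0) :=
  ((psdk_N k).smul (sub_nonneg.2 hγε)).add ((psdk_J α hα k).smul hε.le)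

theorem site_bij (m : ℕ) [NeZero (2 * m)] :
    Function.Bijective (fun j : Site m => (((j : ℤ)) : ZMod (2 * m))) := by
  rw [Fintype.bijective_iff_injective_and_card]
  refine ⟨fun i j hij => ?_, ?_⟩
  · have hi := Finset.mem_Icc.1 i.2
    have hj := Finset.mem_Icc.1 j.2
    have := (ZMod.intCast_eq_intCast_iff_dvd_sub _ _ _).1 hij
    have h0 := Int.eq_zero_of_abs_lt_dvd this (by rw [abs_lt]; push_cast; omega)
    exact Subtype.ext (by omega)
  · rw [ZMod.card, Fintype.card_coe, Int.card_Icc]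
    omega

/-- Gaussian domination `Z(h) ≤ Z(0)` for the periodized Dyson-Ising
ferromagnet with nearest-neighbor coupling `γ−ε ≥ 0` and power-law coupling
`ε·J`, `1 < α < 2`. -/
theorem gaussian_domination (α γ ε : ℝ) (hα1 : 1 < α) (hα2 : α < 2)
    (hε : 0 < ε) (hγε : ε ≤ γ) (m : ℕ) (hm : 1 ≤ m) (h : ℤ → ℝ) :
    Zf α γ ε m h ≤ Zf α γ ε m (fun _ => 0) := by
  obtain ⟨k, rfl⟩ : ∃ k, m = k + 1 := ⟨m - 1, by omega⟩
  let e := Equiv.ofBijective _ (site_bij (k + 1))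
  let f : ZMod (2 * (k + 1)) → ℝ := fun x => Kc α γ ε (k + 1) (x.cast : ℤ) 0
  have hfc : ∀ d : ℤ, f (d : ZMod (2 * (k + 1))) = Kc α γ ε (k + 1) d 0 := by
    intro d
    simp only [f]
    rw [ZMod.coe_intCast, ← Kc_period α γ ε (k + 1) _ (d / (2 * (k + 1) : ℕ))]
    congr 1
    have := Int.emod_add_mul_ediv d (2 * (k + 1) : ℕ)
    push_cast at this ⊢
    exact this
  have hf : ∀ x, f (-x) = f x := by
    intro x
    obtain ⟨d, rfl⟩ := ZMod.intCast_surjective x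
    rw [← Int.cast_neg, hfc, hfc, Kc_neg]
  have hC : PSDk (fun i j : Fin (k + 1) =>
      f (1 + ((i : ℕ) : ZMod (2 * (k + 1))) + ((j : ℕ) : ZMod (2 * (k + 1))))) := by
    convert psdk_K α γ ε hα1 hε hγε k using 3 with i j
    rw [← hfc]
    push_cast
    rfl
  have hZ : ∀ g : ℤ → ℝ, Zf α γ ε (k + 1) g =
      Zg (fun s : ({-1, 1} : Finset ℝ) => (s : ℝ)) (fun x y => f (x - y))
        (fun x => g ((e.symm x : Site (k + 1)) : ℤ)) := by
    intro g
    rw [← Zg_equiv _ e]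
    have hK : ∀ i j : Site (k + 1), f (e i - e j) = Kc α γ ε (k + 1) (i : ℤ) (j : ℤ) := by
      intro i j
      rw [Kc_sub, ← hfc]
      push_cast
      rfl
    simp only [hK, Equiv.symm_apply_apply]
    rfl
  rw [hZ, hZ]
  exact ring_domination _ k f hf hC _
end

section
/- Fix 1 < α < 2 and ε > 0. Then there exists γ₀ ≥ ε (depending on ε and α) such that for every γ > γ₀ there exists δ > 0 with the following property: for every integer m ≥ 1, letting Λ = {1−m, …, m} ⊆ ℤ (a periodic lattice of 2m sites, indices taken mod 2m), J_{j,k} = ∑_{n∈ℤ} |j − k + 2mn|^{−α} for j ≢ k (mod 2m) with J_{j,j} = 0, N_{j,k} = 1 if j − k ≡ ±1 (mod 2m) and 0 otherwise, K_{j,k} = (γ−ε)·N_{j,k} + ε·J_{j,k}, H(σ) = (1/2)·∑_{j,k∈Λ} K_{j,k}·(σ_j − σ_k)² for σ ∈ {−1,1}^Λ, and ⟨f⟩ = (∑_σ f(σ)e^{−H(σ)})/(∑_σ e^{−H(σ)}), one has (1/(2m)²)·∑_{j,k∈Λ} ⟨σ_jσ_k⟩ ≥ δ. -/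
/-- The Hamiltonian `H(σ) = (1/2)·∑_{j,k∈Λ} K_{j,k}(σ_j − σ_k)²`. -/
noncomputable def Hc (α γ ε : ℝ) (m : ℕ) (σ : Spin m) : ℝ :=
  (1 / 2) * ∑ j : Site m, ∑ k : Site m,
    Kc α γ ε m (j : ℤ) (k : ℤ) * ((σ j : ℝ) - (σ k : ℝ)) ^ 2

/-- The Gibbs two-point function
`⟨σ_j σ_k⟩ = (∑_σ σ_j σ_k e^{−H(σ)})/(∑_σ e^{−H(σ)})`. -/
noncomputable def corr (α γ ε : ℝ) (m : ℕ) (j k : Site m) : ℝ :=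
  (∑ σ : Spin m, (σ j : ℝ) * (σ k : ℝ) * Real.exp (-Hc α γ ε m σ)) /
    ∑ σ : Spin m, Real.exp (-Hc α γ ε m σ)

/-- `g_m(p) = (1/(2m))·∑_{j,k∈Λ} cos(p(j−k))·⟨σ_jσ_k⟩`. -/
noncomputable def gm (α γ ε : ℝ) (m : ℕ) (p : ℝ) : ℝ :=
  (1 / (2 * (m : ℝ))) * ∑ j : Site m, ∑ k : Site m,
    Real.cos (p * (((j : ℤ) - (k : ℤ) : ℤ) : ℝ)) * corr α γ ε m j k

/-- `E(p) = (1/2)·∑_{j∈Λ} K_{j,0}·(1 − cos(pj))`. -/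
noncomputable def Ep (α γ ε : ℝ) (m : ℕ) (p : ℝ) : ℝ :=
  (1 / 2) * ∑ j : Site m, Kc α γ ε m (j : ℤ) 0 * (1 - Real.cos (p * ((j : ℤ) : ℝ)))


set_option linter.unusedSectionVars false

namespace DysonLRO

open Finset

/-- Entrywise exponential of a positive semidefinite form is positive semidefinite. -/
lemma exp_kernel_nonneg {T : Type*} [Fintype T] (G : T → T → ℝ)
    (hsymm : ∀ s t, G s t = G t s)
    (hG : ∀ f : T → ℝ, 0 ≤ ∑ s, ∑ t, f s * f t * G s t) (f : T → ℝ) :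
    0 ≤ ∑ s, ∑ t, f s * f t * Real.exp (G s t) := by
  classical
  have key : ∀ A : Matrix T T ℝ, (∀ s t, A s t = A t s) →
      (A.PosSemidef ↔ ∀ f : T → ℝ, 0 ≤ ∑ s, ∑ t, f s * f t * A s t) := by
    intro A hA
    rw [Matrix.posSemidef_iff_dotProduct_mulVec]
    have hdot : ∀ f : T → ℝ, (star f ⬝ᵥ A.mulVec f) = ∑ s, ∑ t, f s * f t * A s t := by
      intro f
      simp only [dotProduct, Matrix.mulVec, Finset.mul_sum, Pi.star_apply, star_trivial]
      exact Finset.sum_congr rfl fun s _ => Finset.sum_congr rfl fun t _ => by ring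
    constructor
    · rintro ⟨_, h⟩ f
      have := h f
      rwa [hdot] at this
    · intro h
      refine ⟨?_, fun f => ?_⟩
      · ext s t
        simp [Matrix.conjTranspose_apply, hA s t]
      · rw [hdot]; exact h f
  have hpow : ∀ n : ℕ, Matrix.PosSemidef (Matrix.of fun s t => G s t ^ n) := by
    intro n
    induction n with
    | zero =>
      rw [key _ (fun s t => by simp)]
      intro f
      have : ∑ s, ∑ t, f s * f t * (Matrix.of fun s t => G s t ^ 0) s t = (∑ s, f s) ^ 2 := by
        simp [sq, Finset.sum_mul_sum]
      rw [this]; positivity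
    | succ n ih =>
      have h1 : Matrix.PosSemidef (Matrix.of G) := (key _ (fun s t => hsymm s t)).2 hG
      have := ih.hadamard h1
      have e : (Matrix.of fun s t => G s t ^ (n + 1)) =
          (Matrix.of fun s t => G s t ^ n).hadamard (Matrix.of G) := by
        ext s t
        simp [Matrix.hadamard, pow_succ]
      rw [e]; exact this
  have hs : HasSum (fun n : ℕ => ∑ s, ∑ t, f s * f t * (G s t ^ n / n.factorial))
      (∑ s, ∑ t, f s * f t * Real.exp (G s t)) := by
    refine hasSum_sum fun s _ => hasSum_sum fun t _ => HasSum.mul_left _ ?_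
    rw [Real.exp_eq_exp_ℝ]
    exact NormedSpace.expSeries_div_hasSum_exp (G s t)
  refine hs.nonneg fun n => ?_
  have := (key _ (fun s t => by simp [hsymm s t])).1 (hpow n) f
  have h2 : ∑ s, ∑ t, f s * f t * (G s t ^ n / n.factorial) =
      (∑ s, ∑ t, f s * f t * (Matrix.of fun s t => G s t ^ n) s t) / n.factorial := by
    simp only [Finset.sum_div, Matrix.of_apply]
    exact Finset.sum_congr rfl fun s _ => Finset.sum_congr rfl fun t _ => by ring
  rw [h2]; positivity

lemma sum_comm4 {S P : Type*} [Fintype S] [Fintype P] (F : S → S → P → P → ℝ) :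
    ∑ s, ∑ t, ∑ p, ∑ q, F s t p q = ∑ p, ∑ q, ∑ s, ∑ t, F s t p q := by
  calc _ = ∑ s, ∑ p, ∑ t, ∑ q, F s t p q :=
        Finset.sum_congr rfl fun s _ => Finset.sum_comm
    _ = ∑ p, ∑ s, ∑ t, ∑ q, F s t p q := Finset.sum_comm
    _ = ∑ p, ∑ s, ∑ q, ∑ t, F s t p q :=
        Finset.sum_congr rfl fun s _ => Finset.sum_congr rfl fun _ _ => Finset.sum_comm
    _ = _ := Finset.sum_congr rfl fun s _ => Finset.sum_comm

/-- Cauchy–Schwarz for the exponential kernel. -/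
lemma kernel_cs {I P : Type*} [Fintype I] [Fintype P] (M : P → P → ℝ)
    (hsymm : ∀ p q, M p q = M q p)
    (hM : ∀ c : P → ℝ, 0 ≤ ∑ p, ∑ q, c p * c q * M p q)
    (w : (P → ℝ) → ℝ) (u v : I → P → ℝ) :
    (∑ a, ∑ b, w (u a) * w (v b) * Real.exp (2 * ∑ p, ∑ q, M p q * u a p * v b q)) ^ 2 ≤
    (∑ a, ∑ b, w (u a) * w (u b) * Real.exp (2 * ∑ p, ∑ q, M p q * u a p * u b q)) *
    (∑ a, ∑ b, w (v a) * w (v b) * Real.exp (2 * ∑ p, ∑ q, M p q * v a p * v b q)) := by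
  classical
  set k : (P → ℝ) → (P → ℝ) → ℝ := fun x y => Real.exp (2 * ∑ p, ∑ q, M p q * x p * y q) with hk
  have hks : ∀ x y, k x y = k y x := by
    intro x y
    simp only [hk]
    congr 2
    rw [Finset.sum_comm]
    exact Finset.sum_congr rfl fun s _ => Finset.sum_congr rfl fun t _ => by
      rw [hsymm t s]; ring
  let z : I ⊕ I → P → ℝ := Sum.elim u v
  have hpsd : ∀ f : I ⊕ I → ℝ, 0 ≤ ∑ s, ∑ t, f s * f t * k (z s) (z t) := by
    refine exp_kernel_nonneg (fun s t => 2 * ∑ p, ∑ q, M p q * z s p * z t q) ?_ ?_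
    · intro s t
      congr 1
      rw [Finset.sum_comm]
      exact Finset.sum_congr rfl fun s _ => Finset.sum_congr rfl fun t _ => by
        rw [hsymm t s]; ring
    · intro f
      have := hM (fun p => ∑ s, f s * z s p)
      have e : ∑ s, ∑ t, f s * f t * (2 * ∑ p, ∑ q, M p q * z s p * z t q) =
          2 * ∑ p, ∑ q, (∑ s, f s * z s p) * (∑ s, f s * z s q) * M p q := by
        simp only [Finset.sum_mul_sum]
        simp only [Finset.mul_sum, Finset.sum_mul]
        rw [sum_comm4]
        refine Finset.sum_congr rfl fun p _ => Finset.sum_congr rfl fun q _ =>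
          Finset.sum_congr rfl fun s _ => Finset.sum_congr rfl fun t _ => ?_
        ring
      rw [e]; positivity
  set A := ∑ a, ∑ b, w (u a) * w (u b) * k (u a) (u b)
  set B := ∑ a, ∑ b, w (u a) * w (v b) * k (u a) (v b)
  set C := ∑ a, ∑ b, w (v a) * w (v b) * k (v a) (v b)
  have hB' : ∑ a, ∑ b, w (v a) * w (u b) * k (v a) (u b) = B := by
    rw [Finset.sum_comm]
    exact Finset.sum_congr rfl fun s _ => Finset.sum_congr rfl fun t _ => by
        rw [hks]; ring
  have hq : ∀ l : ℝ, 0 ≤ A * (l * l) + (2 * B) * l + C := by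
    intro l
    have := hpsd (Sum.elim (fun a => l * w (u a)) (fun a => w (v a)))
    simp only [Fintype.sum_sum_type, Sum.elim_inl, Sum.elim_inr, z] at this
    have e : A * (l * l) + (2 * B) * l + C = A * (l * l) + B * l + B * l + C := by ring
    have e1 : ∑ a, ∑ b, l * w (u a) * (l * w (u b)) * k (u a) (u b) = A * (l * l) := by
      simp only [A, Finset.sum_mul]
      exact Finset.sum_congr rfl fun s _ => Finset.sum_congr rfl fun t _ => by ring
    have e2 : ∑ a, ∑ b, l * w (u a) * w (v b) * k (u a) (v b) = B * l := by
      simp only [B, Finset.sum_mul]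
      exact Finset.sum_congr rfl fun s _ => Finset.sum_congr rfl fun t _ => by ring
    have e3 : ∑ a, ∑ b, w (v a) * (l * w (u b)) * k (v a) (u b) = B * l := by
      rw [← hB']
      simp only [Finset.sum_mul]
      exact Finset.sum_congr rfl fun s _ => Finset.sum_congr rfl fun t _ => by ring
    simp only [Finset.sum_add_distrib] at this
    rw [e1, e2, e3] at this
    change 0 ≤ _ + (_ + C) at this
    linarith
  have := discrim_le_zero hq
  unfold discrim at this
  nlinarith

end DysonLRO

namespace DysonLRO

open Finset

/-- Generalized partition function on an arbitrary finite set of sites. -/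
noncomputable def ZZ {V : Type*} [Fintype V] [DecidableEq V] (K : V → V → ℝ) (h : V → ℝ) : ℝ :=
  ∑ σ : V → ({-1, 1} : Finset ℝ), Real.exp (-(1 / 2) * ∑ j, ∑ k,
    K j k * ((σ j : ℝ) - (σ k : ℝ) - h j + h k) ^ 2)

section RP

variable {V : Type*} [Fintype V] [DecidableEq V] (K : V → V → ℝ) (R : V → Prop) [DecidablePred R]
  (θ : V → V)

/-- Decomposition of a function on `V` in terms of its restriction and its reflection. -/
def splitEquiv (S : Type*) (hθ : ∀ j, θ (θ j) = j) (hR : ∀ j, R (θ j) ↔ ¬ R j) :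
    (({j // R j} → S) × ({j // R j} → S)) ≃ (V → S) where
  toFun ab j := if h : R j then ab.1 ⟨j, h⟩ else ab.2 ⟨θ j, (hR j).2 h⟩
  invFun σ := (fun p => σ p, fun p => σ (θ p))
  left_inv ab := by
    ext p
    · simp [p.2]
    · have : ¬ R (θ p) := by rw [hR]; simpa using p.2
      simp [this, hθ]
  right_inv σ := by
    ext j
    by_cases h : R j <;> simp [h, hθ]

lemma sum_split (hθ : ∀ j, θ (θ j) = j) (hR : ∀ j, R (θ j) ↔ ¬ R j) (f : V → ℝ) :
    ∑ j, f j = ∑ p : {j // R j}, (f p + f (θ p)) := by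
  rw [Finset.sum_add_distrib, ← Fintype.sum_subtype_add_sum_subtype R f]
  congr 1
  refine Fintype.sum_equiv ⟨fun j => ⟨θ j, (hR j).2 j.2⟩,
    fun j => ⟨θ j, by rw [hR]; simpa using j.2⟩, ?_, ?_⟩ _ _ ?_
  · intro j; simp [hθ]
  · intro j; simp [hθ]
  · intro j; simp [hθ]

/-- The weight of one half. -/
noncomputable def wt (x : {j // R j} → ℝ) : ℝ :=
  Real.exp (-(1 / 2) * ∑ p : {j // R j}, ∑ q : {j // R j}, K p q * (x p - x q) ^ 2
    - ∑ p : {j // R j}, ∑ q : {j // R j}, K p (θ q) * x p ^ 2)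

lemma exponent_split (hθ : ∀ j, θ (θ j) = j) (hR : ∀ j, R (θ j) ↔ ¬ R j)
    (hK : ∀ j k, K j k = K k j) (hKθ : ∀ j k, K (θ j) (θ k) = K j k) (φ : V → ℝ) :
    Real.exp (-(1 / 2) * ∑ j, ∑ k, K j k * (φ j - φ k) ^ 2) =
      wt K R θ (fun p => φ p) * wt K R θ (fun p => φ (θ p)) *
      Real.exp (2 * ∑ p : {j // R j}, ∑ q : {j // R j}, K p (θ q) * φ p * φ (θ q)) := by
  unfold wt
  rw [← Real.exp_add, ← Real.exp_add]
  congr 1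
  have hM : ∀ p q, K p (θ q) = K q (θ p) := fun p q => by
    rw [hK p, ← hKθ (θ q) p, hθ]
  have hM2 : ∀ p q, K (θ p) q = K p (θ q) := fun p q => by
    rw [← hKθ (θ p) q, hθ]
  rw [sum_split R θ hθ hR]
  simp only [sum_split R θ hθ hR (fun k => K _ k * (_ - φ k) ^ 2)]
  simp only [hKθ, hM2]
  have s1 : ∑ p : {j // R j}, ∑ q : {j // R j}, K p (θ q) * φ (θ q) ^ 2 =
      ∑ p : {j // R j}, ∑ q : {j // R j}, K p (θ q) * φ (θ p) ^ 2 := by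
    rw [Finset.sum_comm]
    exact Finset.sum_congr rfl fun s _ => Finset.sum_congr rfl fun t _ => by rw [hM]
  have s2 : ∑ p : {j // R j}, ∑ q : {j // R j}, K p (θ q) * φ q ^ 2 =
      ∑ p : {j // R j}, ∑ q : {j // R j}, K p (θ q) * φ p ^ 2 := by
    rw [Finset.sum_comm]
    exact Finset.sum_congr rfl fun s _ => Finset.sum_congr rfl fun t _ => by rw [hM]
  have s3 : ∑ p : {j // R j}, ∑ q : {j // R j}, K p (θ q) * (φ (θ p) * φ q) =
      ∑ p : {j // R j}, ∑ q : {j // R j}, K p (θ q) * (φ p * φ (θ q)) := by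
    rw [Finset.sum_comm]
    exact Finset.sum_congr rfl fun s _ => Finset.sum_congr rfl fun t _ => by rw [hM]; ring
  have e : ∀ p q : {j // R j},
    (K p q * (φ p - φ q) ^ 2 + K p (θ q) * (φ p - φ (θ q)) ^ 2) =
     K p q * (φ p - φ q) ^ 2 + (K p (θ q) * φ p ^ 2 + K p (θ q) * φ (θ q) ^ 2
       - 2 * (K p (θ q) * (φ p * φ (θ q)))) := fun p q => by ring
  have e' : ∀ p q : {j // R j},
    (K p (θ q) * (φ (θ p) - φ q) ^ 2 + K p q * (φ (θ p) - φ (θ q)) ^ 2) =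
     K p q * (φ (θ p) - φ (θ q)) ^ 2 + (K p (θ q) * φ (θ p) ^ 2 + K p (θ q) * φ q ^ 2
       - 2 * (K p (θ q) * (φ (θ p) * φ q))) := fun p q => by ring
  simp only [e, e', mul_assoc]
  simp only [Finset.sum_add_distrib, Finset.sum_sub_distrib, ← Finset.mul_sum, s1, s2, s3]
  ring

lemma ZZ_split (hθ : ∀ j, θ (θ j) = j) (hR : ∀ j, R (θ j) ↔ ¬ R j)
    (hK : ∀ j k, K j k = K k j) (hKθ : ∀ j k, K (θ j) (θ k) = K j k) (h : V → ℝ) :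
    ZZ K h = ∑ a : {j // R j} → ({-1, 1} : Finset ℝ), ∑ b : {j // R j} → ({-1, 1} : Finset ℝ),
      wt K R θ (fun p => (a p : ℝ) - h p) * wt K R θ (fun p => (b p : ℝ) - h (θ p)) *
      Real.exp (2 * ∑ p : {j // R j}, ∑ q : {j // R j},
        K p (θ q) * ((a p : ℝ) - h p) * ((b q : ℝ) - h (θ q))) := by
  rw [← Fintype.sum_prod_type']
  unfold ZZ
  symm
  refine Fintype.sum_equiv (splitEquiv R θ _ hθ hR) _ _ ?_
  rintro ⟨a, b⟩
  set σ := splitEquiv R θ _ hθ hR (a, b) with hσ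
  have ha : ∀ p : {j // R j}, a p = σ p := fun p => by
    have := congrArg (fun x => x.1 p) ((splitEquiv R θ _ hθ hR).symm_apply_apply (a, b))
    exact this.symm
  have hb : ∀ p : {j // R j}, b p = σ (θ p) := fun p => by
    have := congrArg (fun x => x.2 p) ((splitEquiv R θ _ hθ hR).symm_apply_apply (a, b))
    exact this.symm
  have e := exponent_split K R θ hθ hR hK hKθ (fun j => (σ j : ℝ) - h j)
  simp only [ha, hb]
  rw [← e]
  congr 2
  exact Finset.sum_congr rfl fun s _ => Finset.sum_congr rfl fun t _ => by ring

/-- Symmetrization of `h` keeping the values on `R`. -/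
def hR' (h : V → ℝ) (j : V) : ℝ := if R j then h j else h (θ j)
/-- Symmetrization of `h` keeping the values off `R`. -/
def hL' (h : V → ℝ) (j : V) : ℝ := if R j then h (θ j) else h j

/-- Reflection positivity. -/
lemma ZZ_reflect (hθ : ∀ j, θ (θ j) = j) (hR : ∀ j, R (θ j) ↔ ¬ R j)
    (hK : ∀ j k, K j k = K k j) (hKθ : ∀ j k, K (θ j) (θ k) = K j k)
    (hpsd : ∀ c : {j // R j} → ℝ,
      0 ≤ ∑ p : {j // R j}, ∑ q : {j // R j}, c p * c q * K p (θ q)) (h : V → ℝ) :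
    ZZ K h ^ 2 ≤ ZZ K (hR' R θ h) * ZZ K (hL' R θ h) := by
  rw [ZZ_split K R θ hθ hR hK hKθ, ZZ_split K R θ hθ hR hK hKθ, ZZ_split K R θ hθ hR hK hKθ]
  have n : ∀ p : {j // R j}, ¬ R (θ p) := fun p => by rw [hR]; simpa using p.2
  have e1 : ∀ p : {j // R j}, hR' R θ h p = h p := fun p => by simp [hR', p.2]
  have e2 : ∀ p : {j // R j}, hR' R θ h (θ p) = h p := fun p => by simp [hR', n p, hθ]
  have e3 : ∀ p : {j // R j}, hL' R θ h p = h (θ p) := fun p => by simp [hL', p.2]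
  have e4 : ∀ p : {j // R j}, hL' R θ h (θ p) = h (θ p) := fun p => by simp [hL', n p]
  simp only [e1, e2, e3, e4]
  exact kernel_cs (fun p q : {j // R j} => K p (θ q))
    (fun p q => by rw [hK p, ← hKθ (θ q) p, hθ]) hpsd (wt K R θ)
    (fun (a : {j // R j} → ({-1, 1} : Finset ℝ)) p => (a p : ℝ) - h p)
    (fun (a : {j // R j} → ({-1, 1} : Finset ℝ)) p => (a p : ℝ) - h (θ p))

end RP

end DysonLRO

set_option linter.unusedSectionVars false
set_option linter.deprecated false

namespace DysonLRO

open Finset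

/-- Spin flip of a single spin. -/
noncomputable def flip1 (s : ({-1, 1} : Finset ℝ)) : ({-1, 1} : Finset ℝ) :=
  ⟨-(s : ℝ), by
    have := s.2
    simp only [Finset.mem_insert, Finset.mem_singleton] at this ⊢
    rcases this with h | h <;> simp [h]⟩

lemma flip1_flip1 (s : ({-1, 1} : Finset ℝ)) : flip1 (flip1 s) = s := by
  ext; simp [flip1]

lemma spin_sq (s : ({-1, 1} : Finset ℝ)) : (s : ℝ) ^ 2 = 1 := by
  have := s.2
  simp only [Finset.mem_insert, Finset.mem_singleton] at this
  rcases this with h | h <;> simp [h]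

section general
variable {V : Type*} [Fintype V] [DecidableEq V]

lemma sum_flip (F : (V → ({-1, 1} : Finset ℝ)) → ℝ) :
    ∑ σ, F σ = ∑ σ : V → ({-1, 1} : Finset ℝ), F (fun j => flip1 (σ j)) :=
  (Fintype.sum_equiv ⟨fun σ j => flip1 (σ j), fun σ j => flip1 (σ j),
    fun σ => by simp [flip1_flip1], fun σ => by simp [flip1_flip1]⟩ _ _ (fun _ => rfl)).symm

/-- Energy. -/
noncomputable def HH (K : V → V → ℝ) (σ : V → ({-1, 1} : Finset ℝ)) : ℝ :=
  (1 / 2) * ∑ j, ∑ k, K j k * ((σ j : ℝ) - (σ k : ℝ)) ^ 2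

/-- Linear term. -/
noncomputable def XX (K : V → V → ℝ) (h : V → ℝ) (σ : V → ({-1, 1} : Finset ℝ)) : ℝ :=
  ∑ j, ∑ k, K j k * (((σ j : ℝ) - (σ k : ℝ)) * (h j - h k))

/-- Quadratic term. -/
noncomputable def BB (K : V → V → ℝ) (h : V → ℝ) : ℝ :=
  ∑ j, ∑ k, K j k * (h j - h k) ^ 2

lemma ZZ_eq_exp (K : V → V → ℝ) (h : V → ℝ) :
    ZZ K h = Real.exp (-(1 / 2) * BB K h) *
      ∑ σ : V → ({-1, 1} : Finset ℝ), Real.exp (-HH K σ) * Real.exp (XX K h σ) := by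
  unfold ZZ
  rw [Finset.mul_sum]
  refine Finset.sum_congr rfl fun σ _ => ?_
  rw [← Real.exp_add, ← Real.exp_add]
  congr 1
  unfold BB HH XX
  have e : ∀ j k, K j k * ((σ j : ℝ) - (σ k : ℝ) - h j + h k) ^ 2 =
      K j k * ((σ j : ℝ) - (σ k : ℝ)) ^ 2 + K j k * (h j - h k) ^ 2
      - 2 * (K j k * (((σ j : ℝ) - (σ k : ℝ)) * (h j - h k))) := fun j k => by ring
  simp only [e, Finset.sum_add_distrib, Finset.sum_sub_distrib, ← Finset.mul_sum]
  ring

lemma HH_flip (K : V → V → ℝ) (σ : V → ({-1, 1} : Finset ℝ)) :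
    HH K (fun j => flip1 (σ j)) = HH K σ := by
  unfold HH flip1
  congr 1
  exact Finset.sum_congr rfl fun s _ => Finset.sum_congr rfl fun t _ => by simp only; ring

lemma XX_flip (K : V → V → ℝ) (h : V → ℝ) (σ : V → ({-1, 1} : Finset ℝ)) :
    XX K h (fun j => flip1 (σ j)) = - XX K h σ := by
  unfold XX flip1
  simp only [← Finset.sum_neg_distrib]
  exact Finset.sum_congr rfl fun s _ => Finset.sum_congr rfl fun t _ => by ring

lemma ZZ_eq_cosh (K : V → V → ℝ) (h : V → ℝ) :
    ZZ K h = Real.exp (-(1 / 2) * BB K h) *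
      ∑ σ : V → ({-1, 1} : Finset ℝ), Real.exp (-HH K σ) * Real.cosh (XX K h σ) := by
  rw [ZZ_eq_exp]
  congr 1
  have h1 := sum_flip (fun σ : V → ({-1, 1} : Finset ℝ) =>
    Real.exp (-HH K σ) * Real.exp (XX K h σ))
  simp only [HH_flip, XX_flip] at h1
  have h2 : ∑ σ : V → ({-1, 1} : Finset ℝ), Real.exp (-HH K σ) * Real.cosh (XX K h σ) =
     ((∑ σ : V → ({-1, 1} : Finset ℝ), Real.exp (-HH K σ) * Real.exp (XX K h σ)) +
     (∑ σ : V → ({-1, 1} : Finset ℝ), Real.exp (-HH K σ) * Real.exp (-XX K h σ))) / 2 := by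
    rw [← Finset.sum_add_distrib, Finset.sum_div]
    refine Finset.sum_congr rfl fun σ _ => ?_
    rw [Real.cosh_eq]; ring
  rw [h2, ← h1]; ring

lemma ZZ_zero (K : V → V → ℝ) :
    ZZ K 0 = ∑ σ : V → ({-1, 1} : Finset ℝ), Real.exp (-HH K σ) := by
  rw [ZZ_eq_exp]
  simp [BB, XX]

instance : Nonempty ({-1, 1} : Finset ℝ) := ⟨⟨1, by simp⟩⟩

lemma ZZ_pos (K : V → V → ℝ) (h : V → ℝ) : 0 < ZZ K h := by
  unfold ZZ
  exact Finset.sum_pos (fun σ _ => Real.exp_pos _) Finset.univ_nonempty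

lemma BB_nonneg (K : V → V → ℝ) (hK0 : ∀ j k, 0 ≤ K j k) (h : V → ℝ) : 0 ≤ BB K h :=
  Finset.sum_nonneg fun j _ => Finset.sum_nonneg fun k _ => mul_nonneg (hK0 j k) (sq_nonneg _)

lemma XX_sq_le (K : V → V → ℝ) (hK0 : ∀ j k, 0 ≤ K j k) (h : V → ℝ)
    (σ : V → ({-1, 1} : Finset ℝ)) :
    XX K h σ ^ 2 ≤ (4 * ∑ j, ∑ k, K j k) * BB K h := by
  have h1 : XX K h σ ^ 2 ≤ (∑ j, ∑ k, K j k * ((σ j : ℝ) - (σ k : ℝ)) ^ 2) * BB K h := by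
    unfold XX BB
    simp only [← Finset.sum_product']
    refine Finset.sum_sq_le_sum_mul_sum_of_sq_eq_mul _ ?_ ?_ ?_
    · intro i _; exact mul_nonneg (hK0 _ _) (sq_nonneg _)
    · intro i _; exact mul_nonneg (hK0 _ _) (sq_nonneg _)
    · intro i _; ring
  refine h1.trans (mul_le_mul_of_nonneg_right ?_ (BB_nonneg K hK0 h))
  rw [Finset.mul_sum]
  refine Finset.sum_le_sum fun j _ => ?_
  rw [Finset.mul_sum]
  refine Finset.sum_le_sum fun k _ => ?_
  rw [mul_comm]
  refine mul_le_mul_of_nonneg_right ?_ (hK0 j k)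
  nlinarith [spin_sq (σ j), spin_sq (σ k), sq_nonneg ((σ j : ℝ) + σ k)]

lemma log_ZZ_le (K : V → V → ℝ) (hK0 : ∀ j k, 0 ≤ K j k) (h : V → ℝ) :
    Real.log (ZZ K h) - Real.log (ZZ K 0) ≤ (2 * ∑ j, ∑ k, K j k) * BB K h := by
  have hle : ZZ K h ≤ Real.exp ((2 * ∑ j, ∑ k, K j k) * BB K h) * ZZ K 0 := by
    rw [ZZ_eq_cosh, ZZ_zero]
    have h1 : Real.exp (-(1 / 2) * BB K h) ≤ 1 := by
      rw [Real.exp_le_one_iff]; linarith [BB_nonneg K hK0 h]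
    have h0 : 0 ≤ ∑ σ : V → ({-1, 1} : Finset ℝ), Real.exp (-HH K σ) * Real.cosh (XX K h σ) :=
      Finset.sum_nonneg fun σ _ => mul_nonneg (Real.exp_pos _).le (Real.cosh_pos _).le
    refine (mul_le_of_le_one_left h0 h1).trans ?_
    rw [Finset.mul_sum]
    refine Finset.sum_le_sum fun σ _ => ?_
    rw [mul_comm]
    refine mul_le_mul_of_nonneg_right ?_ (Real.exp_pos _).le
    refine (Real.cosh_le_exp_half_sq _).trans (Real.exp_le_exp.2 ?_)
    linarith [XX_sq_le K hK0 h σ]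
  have := Real.log_le_log (ZZ_pos K h) hle
  rw [Real.log_mul (Real.exp_pos _).ne' (ZZ_pos K 0).ne', Real.log_exp] at this
  linarith

end general

section cyc

variable {m : ℕ} [NeZero (2 * m)]

/-- Gradient energy. -/
noncomputable def DD (h : ZMod (2 * m) → ℝ) : ℝ := ∑ j, (h (j + 1) - h j) ^ 2

lemma DD_nonneg (h : ZMod (2 * m) → ℝ) : 0 ≤ DD h := Finset.sum_nonneg fun _ _ => sq_nonneg _

lemma diff_sq_le (h : ZMod (2 * m) → ℝ) (j k : ZMod (2 * m)) :
    (h j - h k) ^ 2 ≤ (2 * m : ℝ) ^ 2 * DD h := by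
  have hstep : ∀ i, |h (i + 1) - h i| ≤ √(DD h) := fun i => by
    refine Real.abs_le_sqrt ?_
    exact Finset.single_le_sum (f := fun j => (h (j + 1) - h j) ^ 2)
      (fun _ _ => sq_nonneg _) (Finset.mem_univ i)
  have hn : ∀ n : ℕ, |h (k + n) - h k| ≤ n * √(DD h) := by
    intro n
    induction n with
    | zero => simp
    | succ n ih =>
      have := hstep (k + n)
      push_cast
      have e : h (k + (n + 1)) - h k = (h (k + n + 1) - h (k + n)) + (h (k + n) - h k) := by
        rw [add_assoc]; ring
      rw [e]
      refine (abs_add_le _ _).trans ?_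
      linarith
  have hj : j = k + ((j - k).val : ℕ) := by
    rw [ZMod.natCast_zmod_val]; ring
  have h1 := hn (j - k).val
  rw [← hj] at h1
  have h2 : ((j - k).val : ℝ) ≤ 2 * m := by
    have := (ZMod.val_lt (j - k)).le
    exact_mod_cast this
  have h3 : |h j - h k| ≤ (2 * m) * √(DD h) :=
    h1.trans (mul_le_mul_of_nonneg_right h2 (Real.sqrt_nonneg _))
  have h4 := pow_le_pow_left₀ (abs_nonneg _) h3 2
  rwa [sq_abs, mul_pow, Real.sq_sqrt (DD_nonneg h)] at h4

lemma val_refl (x : ZMod (2 * m)) : (-x - 1).val = 2 * m - 1 - x.val := by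
  have hx := ZMod.val_lt x
  have e : -x - 1 = ((2 * m - 1 - x.val : ℕ) : ZMod (2 * m)) := by
    have h2 : ((2 * m - 1 - x.val : ℕ) + 1 + x.val : ℕ) = 2 * m := by omega
    have h3 := congrArg (Nat.cast : ℕ → ZMod (2 * m)) h2
    rw [ZMod.natCast_self] at h3
    push_cast [ZMod.natCast_zmod_val] at h3 ⊢
    linear_combination -h3
  rw [e, ZMod.val_natCast_of_lt (by omega)]

lemma val_succ (x : ZMod (2 * m)) (h : x.val + 1 < 2 * m) : (x + 1).val = x.val + 1 := by
  have e : x + 1 = ((x.val + 1 : ℕ) : ZMod (2 * m)) := by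
    push_cast [ZMod.natCast_zmod_val]; rfl
  conv_lhs => rw [e]
  rw [ZMod.val_natCast_of_lt h]

/-- Half space. -/
def RR (r j : ZMod (2 * m)) : Prop := (j - r - 1).val < m
instance (r : ZMod (2 * m)) : DecidablePred (RR r) := fun j => by unfold RR; infer_instance
/-- Reflection. -/
def TT (r j : ZMod (2 * m)) : ZMod (2 * m) := 2 * r + 1 - j

lemma TT_TT (r j : ZMod (2 * m)) : TT r (TT r j) = j := by unfold TT; ring

lemma RR_TT (r j : ZMod (2 * m)) : RR r (TT r j) ↔ ¬ RR r j := by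
  unfold RR TT
  have : 2 * r + 1 - j - r - 1 = -(j - r - 1) - 1 := by ring
  rw [this, val_refl]
  have := ZMod.val_lt (j - r - 1)
  omega

lemma two_m_zero : (2 * m : ZMod (2 * m)) = 0 := by
  have := ZMod.natCast_self (2 * m)
  push_cast at this; exact this

lemma crossing (r j : ZMod (2 * m)) (hc : ¬ (RR r j ↔ RR r (j + 1))) : TT r j = j + 1 := by
  unfold RR at hc
  unfold TT
  have e : j + 1 - r - 1 = (j - r - 1) + 1 := by ring
  rw [e] at hc
  set x := j - r - 1 with hx
  have hj : j = x + r + 1 := by rw [hx]; ring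
  have hv := ZMod.val_lt x
  have hx1 : x = (x.val : ZMod (2 * m)) := (ZMod.natCast_zmod_val x).symm
  have h2 := two_m_zero (m := m)
  by_cases h : x.val + 1 < 2 * m
  · rw [val_succ x h] at hc
    have : x.val + 1 = m := by omega
    have h3 := congrArg (Nat.cast : ℕ → ZMod (2 * m)) this
    push_cast [ZMod.natCast_zmod_val] at h3
    rw [hj]
    linear_combination -2 * h3 - h2
  · have : x.val + 1 = 2 * m := by omega
    have h3 := congrArg (Nat.cast : ℕ → ZMod (2 * m)) this
    push_cast [ZMod.natCast_zmod_val] at h3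
    rw [hj]
    linear_combination -2 * h3 - 2 * h2

lemma crossing_r (r : ZMod (2 * m)) : ¬ (RR r r ↔ RR r (r + 1)) := by
  unfold RR
  have e1 : r - r - 1 = -(0 : ZMod (2 * m)) - 1 := by ring
  have e2 : r + 1 - r - 1 = (0 : ZMod (2 * m)) := by ring
  rw [e1, e2, val_refl]
  have := NeZero.ne (2 * m)
  simp
  omega

lemma DD_reflect (r : ZMod (2 * m)) (h : ZMod (2 * m) → ℝ) :
    DD (hR' (RR r) (TT r) h) + DD (hL' (RR r) (TT r) h) ≤
      2 * DD h - 2 * (h (r + 1) - h r) ^ 2 := by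
  set g := hR' (RR r) (TT r) h with hg
  set g' := hL' (RR r) (TT r) h with hg'
  have hT : ∀ j, TT r (j + 1) = 2 * r - j := fun j => by unfold TT; ring
  have hT' : ∀ j, TT r j = 2 * r - j + 1 := fun j => by unfold TT; ring
  have hcross : ∀ j, ¬ (RR r j ↔ RR r (j + 1)) →
      (g (j + 1) - g j) ^ 2 + (g' (j + 1) - g' j) ^ 2 = 0 := by
    intro j hc
    have h1 := crossing r j hc
    have h2 : TT r (j + 1) = j := by rw [← h1, TT_TT]
    simp only [hg, hg', hR', hL', h1, h2]
    by_cases a : RR r j <;> by_cases b : RR r (j + 1) <;> simp [a, b] at hc ⊢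
  have hle : ∀ j, (g (j + 1) - g j) ^ 2 + (g' (j + 1) - g' j) ^ 2 ≤
      ((h (j + 1) - h j) ^ 2 + (h (2 * r - j + 1) - h (2 * r - j)) ^ 2) -
       (if j = r then 2 * (h (r + 1) - h r) ^ 2 else 0) := by
    intro j
    by_cases hjr : j = r
    · subst hjr
      rw [hcross j (crossing_r j)]
      have : 2 * j - j = j := by ring
      rw [this]; simp; linarith
    · rw [if_neg hjr, sub_zero]
      by_cases hc : RR r j ↔ RR r (j + 1)
      · simp only [hg, hg', hR', hL', hT]
        rw [hT' j]
        by_cases a : RR r j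
        · have b := hc.1 a
          simp only [a, b, if_true]
          apply le_of_eq; ring
        · have b : ¬ RR r (j + 1) := fun b => a (hc.2 b)
          simp only [a, b, if_false]
          apply le_of_eq; ring
      · rw [hcross j hc]; positivity
  have hsum := Finset.sum_le_sum fun j (_ : j ∈ Finset.univ) => hle j
  rw [Finset.sum_add_distrib, Finset.sum_sub_distrib, Finset.sum_add_distrib] at hsum
  have e : ∑ j, (h (2 * r - j + 1) - h (2 * r - j)) ^ 2 = DD h :=
    Fintype.sum_equiv (Equiv.subLeft (2 * r)) _ _ (fun j => by simp)
  rw [e] at hsum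
  simp only [Finset.sum_ite_eq', Finset.mem_univ, if_true] at hsum
  unfold DD at *
  linarith

/-- Gaussian domination. -/
lemma gaussian_domination (κ : ZMod (2 * m) → ℝ) (hκ0 : ∀ x, 0 ≤ κ x) (hκ : ∀ x, κ (-x) = κ x)
    (hpsd : ∀ (P : Type) [Fintype P] (a : P → ℕ), (∀ p, a p < m) → ∀ c : P → ℝ,
      0 ≤ ∑ p, ∑ q, c p * c q * κ ((a p + a q + 1 : ℕ) : ZMod (2 * m)))
    (h : ZMod (2 * m) → ℝ) :
    ZZ (fun j k => κ (j - k)) h ≤ ZZ (fun j k => κ (j - k)) 0 := by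
  set K : ZMod (2 * m) → ZMod (2 * m) → ℝ := fun j k => κ (j - k) with hKdef
  have hK0 : ∀ j k, 0 ≤ K j k := fun j k => hκ0 _
  have hrefl : ∀ r h, ZZ K h ^ 2 ≤ ZZ K (hR' (RR r) (TT r) h) * ZZ K (hL' (RR r) (TT r) h) := by
    intro r h
    refine ZZ_reflect K (RR r) (TT r) (TT_TT r) (RR_TT r) ?_ ?_ ?_ h
    · intro j k; simp only [hKdef]; rw [← hκ]; congr 1; ring
    · intro j k; simp only [hKdef, TT]; rw [← hκ]; congr 1; ring
    · intro c
      have := hpsd {j // RR r j} (fun p => (p.1 - r - 1).val) (fun p => p.2) c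
      convert this using 6 with p _ q _
      simp only [TT]
      push_cast [ZMod.natCast_zmod_val]
      ring
  set L : (ZMod (2 * m) → ℝ) → ℝ := fun h => Real.log (ZZ K h) - Real.log (ZZ K 0) with hL
  have hLrefl : ∀ r h, L h ≤ (L (hR' (RR r) (TT r) h) + L (hL' (RR r) (TT r) h)) / 2 := by
    intro r h
    have := Real.log_le_log (pow_pos (ZZ_pos K h) 2) (hrefl r h)
    rw [Real.log_pow, Real.log_mul (ZZ_pos K _).ne' (ZZ_pos K _).ne'] at this
    simp only [hL]
    push_cast at this
    linarith
  have hm0 : (0 : ℝ) < 2 * m := by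
    have := Nat.pos_of_ne_zero (NeZero.ne (2 * m))
    exact_mod_cast this
  have hstep : ∀ M : ℝ, 0 ≤ M → (∀ h, L h ≤ M * DD h) →
      ∀ h, L h ≤ (M * (1 - 1 / (2 * m))) * DD h := by
    intro M hM hb h
    have h1 : ∀ r, L h ≤ M * (DD h - (h (r + 1) - h r) ^ 2) := by
      intro r
      have a := hLrefl r h
      have b := hb (hR' (RR r) (TT r) h)
      have c := hb (hL' (RR r) (TT r) h)
      have d := mul_le_mul_of_nonneg_left (DD_reflect r h) hM
      linarith
    have h2 := Finset.sum_le_sum fun r (_ : r ∈ Finset.univ) => h1 r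
    have e1 : ∑ _r : ZMod (2 * m), L h = 2 * (m : ℝ) * L h := by
      rw [Finset.sum_const, Finset.card_univ, ZMod.card, nsmul_eq_mul]; push_cast; ring
    have e2 : ∑ r, M * (DD h - (h (r + 1) - h r) ^ 2) = M * (2 * m * DD h - DD h) := by
      rw [← Finset.mul_sum, Finset.sum_sub_distrib, Finset.sum_const, Finset.card_univ,
        ZMod.card, nsmul_eq_mul]
      push_cast
      rfl
    rw [e1, e2] at h2
    have e : M * (1 - 1 / (2 * m)) * DD h = (M * (2 * m * DD h - DD h)) / (2 * m) := by
      have hm1 : (m : ℝ) ≠ 0 := by intro h0; rw [h0] at hm0; simp at hm0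
      field_simp
    rw [e, le_div_iff₀ hm0]
    linarith
  set M₀ : ℝ := (2 * ∑ j, ∑ k, K j k) * ((∑ j, ∑ k, K j k) * (2 * m : ℝ) ^ 2) with hM₀
  have hKs : 0 ≤ ∑ j, ∑ k, K j k :=
    Finset.sum_nonneg fun j _ => Finset.sum_nonneg fun k _ => hK0 j k
  have hM₀0 : 0 ≤ M₀ := by positivity
  have hstart : ∀ h, L h ≤ M₀ * DD h := by
    intro h
    refine (log_ZZ_le K hK0 h).trans ?_
    rw [hM₀, mul_assoc (2 * _)]
    refine mul_le_mul_of_nonneg_left ?_ (by positivity)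
    unfold BB
    simp only [Finset.sum_mul]
    refine Finset.sum_le_sum fun j _ => Finset.sum_le_sum fun k _ => ?_
    rw [mul_assoc]
    exact mul_le_mul_of_nonneg_left (diff_sq_le h j k) (hK0 j k)
  have hq0 : 0 ≤ 1 - 1 / (2 * m : ℝ) := by
    have : (1 : ℝ) ≤ 2 * m := by
      have := Nat.pos_of_ne_zero (NeZero.ne (2 * m))
      exact_mod_cast this
    rw [sub_nonneg, div_le_one hm0]; exact this
  have hq1 : 1 - 1 / (2 * m : ℝ) < 1 := by
    have : 0 < 1 / (2 * m : ℝ) := by positivity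
    linarith
  have hiter : ∀ n : ℕ, ∀ h, L h ≤ (M₀ * (1 - 1 / (2 * m : ℝ)) ^ n) * DD h := by
    intro n
    induction n with
    | zero => simpa using hstart
    | succ n ih =>
      have := hstep _ (by positivity) ih
      intro h
      rw [pow_succ, ← mul_assoc]
      exact this h
  have hlim : Filter.Tendsto (fun n : ℕ => (M₀ * (1 - 1 / (2 * m : ℝ)) ^ n) * DD h)
      Filter.atTop (nhds ((M₀ * 0) * DD h)) :=
    ((tendsto_pow_atTop_nhds_zero_of_lt_one hq0 hq1).const_mul M₀).mul_const _
  have hfin : L h ≤ 0 := by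
    have := ge_of_tendsto' hlim (fun n => hiter n h)
    simpa using this
  have h5 : Real.log (ZZ K h) ≤ Real.log (ZZ K 0) := by
    simp only [hL] at hfin; linarith
  exact (Real.log_le_log_iff (ZZ_pos K h) (ZZ_pos K 0)).1 h5

end cyc

end DysonLRO

namespace DysonLRO

open Finset

lemma one_add_le_cosh (x : ℝ) : 1 + x ^ 2 / 2 ≤ Real.cosh x := by
  have h1 : Real.cosh x = 1 + 2 * Real.sinh (x / 2) ^ 2 := by
    have := Real.cosh_two_mul (x / 2)
    rw [show 2 * (x / 2) = x by ring] at this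
    rw [this, Real.cosh_sq]; ring
  have h2 : (x / 2) ^ 2 ≤ Real.sinh (x / 2) ^ 2 := by
    rw [← sq_abs, ← sq_abs (Real.sinh _), Real.abs_sinh]
    exact pow_le_pow_left₀ (abs_nonneg _) (Real.self_le_sinh_iff.2 (abs_nonneg _)) 2
  rw [h1]; nlinarith

section general
variable {V : Type*} [Fintype V] [DecidableEq V]

lemma XX_smul (K : V → V → ℝ) (h : V → ℝ) (s : ℝ) (σ : V → ({-1, 1} : Finset ℝ)) :
    XX K (fun j => s * h j) σ = s * XX K h σ := by
  unfold XX
  simp only [Finset.mul_sum]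
  exact Finset.sum_congr rfl fun s _ => Finset.sum_congr rfl fun t _ => by ring

lemma BB_smul (K : V → V → ℝ) (h : V → ℝ) (s : ℝ) :
    BB K (fun j => s * h j) = s ^ 2 * BB K h := by
  unfold BB
  simp only [Finset.mul_sum]
  exact Finset.sum_congr rfl fun s _ => Finset.sum_congr rfl fun t _ => by ring

lemma second_order (K : V → V → ℝ) (hgd : ∀ h, ZZ K h ≤ ZZ K 0) (h : V → ℝ) :
    ∑ σ : V → ({-1, 1} : Finset ℝ), Real.exp (-HH K σ) * XX K h σ ^ 2 ≤ BB K h * ZZ K 0 := by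
  set P := ∑ σ : V → ({-1, 1} : Finset ℝ), Real.exp (-HH K σ) * XX K h σ ^ 2 with hP
  set B := BB K h with hB
  have hZ := ZZ_pos K 0
  have h1 : ∀ s : ℝ, ZZ K 0 + s ^ 2 / 2 * P ≤ Real.exp (s ^ 2 * B / 2) * ZZ K 0 := by
    intro s
    have h2 := hgd (fun j => s * h j)
    rw [ZZ_eq_cosh, BB_smul] at h2
    simp only [XX_smul] at h2
    have h3 : ZZ K 0 + s ^ 2 / 2 * P ≤
        ∑ σ : V → ({-1, 1} : Finset ℝ), Real.exp (-HH K σ) * Real.cosh (s * XX K h σ) := by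
      rw [ZZ_zero, hP, Finset.mul_sum, ← Finset.sum_add_distrib]
      refine Finset.sum_le_sum fun σ _ => ?_
      have := mul_le_mul_of_nonneg_left (one_add_le_cosh (s * XX K h σ))
        (Real.exp_pos (-HH K σ)).le
      refine le_trans (le_of_eq ?_) this
      ring
    have h4 := mul_le_mul_of_nonneg_left h2 (Real.exp_pos (s ^ 2 * B / 2)).le
    rw [← mul_assoc, ← Real.exp_add] at h4
    rw [show s ^ 2 * B / 2 + -(1 / 2) * (s ^ 2 * BB K h) = 0 by rw [hB]; ring, Real.exp_zero,
      one_mul] at h4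
    exact h3.trans h4
  have hlim : Filter.Tendsto (fun s : ℝ => (B + s ^ 2 * B ^ 2 / 2) * ZZ K 0)
      (nhdsWithin 0 (Set.Ioi 0)) (nhds ((B + 0 ^ 2 * B ^ 2 / 2) * ZZ K 0)) := by
    refine tendsto_nhdsWithin_of_tendsto_nhds ?_
    exact Continuous.tendsto (by fun_prop) 0
  have hev : ∀ᶠ s : ℝ in nhdsWithin 0 (Set.Ioi 0), P ≤ (B + s ^ 2 * B ^ 2 / 2) * ZZ K 0 := by
    have hsmall : ∀ᶠ s : ℝ in nhdsWithin 0 (Set.Ioi 0), |s ^ 2 * B / 2| < 1 := by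
      refine nhdsWithin_le_nhds ?_
      have : Filter.Tendsto (fun s : ℝ => |s ^ 2 * B / 2|) (nhds 0) (nhds |0 ^ 2 * B / 2|) :=
        Continuous.tendsto (by fun_prop) 0
      refine this.eventually_lt_const ?_
      simp
    filter_upwards [hsmall, self_mem_nhdsWithin] with s hs hs0
    have hs0 : (0 : ℝ) < s := hs0
    have h2 := (abs_le.1 (Real.abs_exp_sub_one_sub_id_le hs.le)).2
    have h3 := h1 s
    have h4 : s ^ 2 / 2 * P ≤ s ^ 2 / 2 * ((B + s ^ 2 * B ^ 2 / 2) * ZZ K 0) := by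
      have h5 : Real.exp (s ^ 2 * B / 2) * ZZ K 0 ≤
          (1 + s ^ 2 * B / 2 + (s ^ 2 * B / 2) ^ 2) * ZZ K 0 :=
        mul_le_mul_of_nonneg_right (by linarith) hZ.le
      refine le_trans (b := (s ^ 2 * B / 2 + (s ^ 2 * B / 2) ^ 2) * ZZ K 0) (by linarith)
        (le_of_eq (by ring))
    exact le_of_mul_le_mul_left h4 (by positivity)
  have := ge_of_tendsto hlim hev
  simpa using this

lemma infrared_eig (K : V → V → ℝ) (hK : ∀ j k, K j k = K k j) (hgd : ∀ h, ZZ K h ≤ ZZ K 0)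
    (h : V → ℝ) (l : ℝ) (hl : 0 < l) (heig : ∀ j, ∑ k, K j k * (h j - h k) = l * h j) :
    ∑ σ : V → ({-1, 1} : Finset ℝ), Real.exp (-HH K σ) * (∑ j, (σ j : ℝ) * h j) ^ 2 ≤
      (∑ j, h j ^ 2) / (2 * l) * ZZ K 0 := by
  have key : ∀ f : V → ℝ, ∑ j, ∑ k, K j k * ((f j - f k) * (h j - h k)) =
      2 * l * ∑ j, f j * h j := by
    intro f
    have e1 : ∑ j, ∑ k, K j k * (f j * (h j - h k)) = l * ∑ j, f j * h j := by
      rw [Finset.mul_sum]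
      refine Finset.sum_congr rfl fun j _ => ?_
      rw [show l * (f j * h j) = f j * (l * h j) by ring, ← heig j, Finset.mul_sum]
      exact Finset.sum_congr rfl fun k _ => by ring
    have e2 : ∑ j, ∑ k, K j k * (f k * (h j - h k)) = - (l * ∑ j, f j * h j) := by
      rw [← e1, Finset.sum_comm, ← Finset.sum_neg_distrib]
      refine Finset.sum_congr rfl fun j _ => ?_
      rw [← Finset.sum_neg_distrib]
      exact Finset.sum_congr rfl fun k _ => by rw [hK]; ring
    have e3 : ∑ j, ∑ k, K j k * ((f j - f k) * (h j - h k)) =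
        ∑ j, ∑ k, K j k * (f j * (h j - h k)) - ∑ j, ∑ k, K j k * (f k * (h j - h k)) := by
      simp only [← Finset.sum_sub_distrib]
      exact Finset.sum_congr rfl fun s _ => Finset.sum_congr rfl fun t _ => by ring
    rw [e3, e1, e2]; ring
  have h1 := second_order K hgd h
  have hB : BB K h = 2 * l * ∑ j, h j ^ 2 := by
    unfold BB
    have := key h
    simp only [sq]; exact this
  have hX : ∀ σ, XX K h σ = 2 * l * ∑ j, (σ j : ℝ) * h j := fun σ => key (fun j => (σ j : ℝ))
  simp only [hX, hB, mul_pow (2 * l)] at h1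
  have e : ∑ σ : V → ({-1, 1} : Finset ℝ),
      Real.exp (-HH K σ) * ((2 * l) ^ 2 * (∑ j, (σ j : ℝ) * h j) ^ 2) =
      (2 * l) ^ 2 * ∑ σ : V → ({-1, 1} : Finset ℝ),
        Real.exp (-HH K σ) * (∑ j, (σ j : ℝ) * h j) ^ 2 := by
    rw [Finset.mul_sum]
    exact Finset.sum_congr rfl fun s _ => by ring
  rw [e] at h1
  refine le_of_mul_le_mul_left (h1.trans (le_of_eq ?_)) (by positivity : 0 < (2 * l) ^ 2)
  field_simp

end general

section cyc
variable {m : ℕ} [NeZero (2 * m)]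

/-- Real part of the character. -/
noncomputable def CC (l x : ZMod (2 * m)) : ℝ := (ZMod.stdAddChar (l * x)).re
/-- Imaginary part of the character. -/
noncomputable def SS (l x : ZMod (2 * m)) : ℝ := (ZMod.stdAddChar (l * x)).im

lemma CC_add (l x y : ZMod (2 * m)) : CC l (x + y) = CC l x * CC l y - SS l x * SS l y := by
  unfold CC SS
  rw [mul_add, AddChar.map_add_eq_mul, Complex.mul_re]

lemma SS_add (l x y : ZMod (2 * m)) : SS l (x + y) = CC l x * SS l y + SS l x * CC l y := by
  unfold CC SS
  rw [mul_add, AddChar.map_add_eq_mul, Complex.mul_im]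

lemma CS_sq (l x : ZMod (2 * m)) : CC l x ^ 2 + SS l x ^ 2 = 1 := by
  unfold CC SS
  have h : Complex.normSq (ZMod.stdAddChar (l * x)) = 1 := by
    rw [ZMod.stdAddChar_apply]; exact Circle.normSq_coe _
  rw [Complex.normSq_apply] at h
  linarith

lemma char_neg (x : ZMod (2 * m)) :
    (ZMod.stdAddChar (-x) : ℂ) = (starRingEnd ℂ) (ZMod.stdAddChar x) := by
  rw [ZMod.stdAddChar_apply, ZMod.stdAddChar_apply, AddChar.map_neg_eq_inv, Circle.coe_inv_eq_conj]

lemma CC_neg (l x : ZMod (2 * m)) : CC l (-x) = CC l x := by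
  unfold CC
  rw [mul_neg, char_neg, Complex.conj_re]

lemma SS_neg (l x : ZMod (2 * m)) : SS l (-x) = - SS l x := by
  unfold SS
  rw [mul_neg, char_neg, Complex.conj_im]

lemma sum_CC (x : ZMod (2 * m)) : ∑ l, CC l x = if x = 0 then (2 * m : ℝ) else 0 := by
  unfold CC
  have := AddChar.sum_mulShift x (ZMod.isPrimitive_stdAddChar (2 * m))
  rw [← Complex.re_sum, this]
  split_ifs <;> simp [ZMod.card]

/-- Dispersion relation. -/
noncomputable def lam (κ : ZMod (2 * m) → ℝ) (l : ZMod (2 * m)) : ℝ := ∑ x, κ x * (1 - CC l x)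

lemma sum_kS (κ : ZMod (2 * m) → ℝ) (hκ : ∀ x, κ (-x) = κ x) (l : ZMod (2 * m)) :
    ∑ x, κ x * SS l x = 0 := by
  have : ∑ x, κ x * SS l x = ∑ x, - (κ x * SS l x) :=
    Fintype.sum_equiv (Equiv.neg _) _ _ (fun x => by simp [hκ, SS_neg])
  rw [Finset.sum_neg_distrib] at this
  linarith

lemma sum_shift (κ : ZMod (2 * m) → ℝ) (F : ZMod (2 * m) → ℝ)
    (j : ZMod (2 * m)) : ∑ k, κ (j - k) * (F j - F k) = ∑ x, κ x * (F j - F (j + -x)) :=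
  Fintype.sum_equiv (Equiv.subLeft j) _ _ (fun x => by simp)

lemma eig_C (κ : ZMod (2 * m) → ℝ) (hκ : ∀ x, κ (-x) = κ x) (l j : ZMod (2 * m)) :
    ∑ k, κ (j - k) * (CC l j - CC l k) = lam κ l * CC l j := by
  rw [sum_shift]
  have e : ∀ x, κ x * (CC l j - CC l (j + -x)) =
      κ x * (1 - CC l x) * CC l j - SS l j * (κ x * SS l x) := fun x => by
    rw [CC_add, CC_neg, SS_neg]; ring
  simp only [e, Finset.sum_sub_distrib]
  rw [← Finset.mul_sum, sum_kS κ hκ, ← Finset.sum_mul, lam]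
  ring

lemma eig_S (κ : ZMod (2 * m) → ℝ) (hκ : ∀ x, κ (-x) = κ x) (l j : ZMod (2 * m)) :
    ∑ k, κ (j - k) * (SS l j - SS l k) = lam κ l * SS l j := by
  rw [sum_shift]
  have e : ∀ x, κ x * (SS l j - SS l (j + -x)) =
      κ x * (1 - CC l x) * SS l j + CC l j * (κ x * SS l x) := fun x => by
    rw [SS_add, CC_neg, SS_neg]; ring
  simp only [e, Finset.sum_add_distrib]
  rw [← Finset.mul_sum, sum_kS κ hκ, ← Finset.sum_mul, lam]
  ring

lemma plancherel (f : ZMod (2 * m) → ℝ) :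
    ∑ l, ((∑ j, f j * CC l j) ^ 2 + (∑ j, f j * SS l j) ^ 2) = 2 * m * ∑ j, f j ^ 2 := by
  have e : ∀ l, (∑ j, f j * CC l j) ^ 2 + (∑ j, f j * SS l j) ^ 2 =
      ∑ j, ∑ k, f j * f k * CC l (j + -k) := fun l => by
    rw [sq, sq, Finset.sum_mul_sum, Finset.sum_mul_sum]
    simp only [← Finset.sum_add_distrib]
    refine Finset.sum_congr rfl fun s _ => Finset.sum_congr rfl fun t _ => ?_
    rw [CC_add, CC_neg, SS_neg]; ring
  simp only [e]
  rw [Finset.sum_comm, Finset.mul_sum]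
  refine Finset.sum_congr rfl fun j _ => ?_
  rw [Finset.sum_comm]
  simp only [← Finset.mul_sum, sum_CC]
  rw [Finset.sum_eq_single j]
  · simp; ring
  · intro k _ hk
    rw [if_neg, mul_zero]
    intro h
    apply hk
    have : j - k = 0 := by rw [sub_eq_add_neg]; exact h
    exact (sub_eq_zero.1 this).symm
  · simp

lemma sum_rule (κ : ZMod (2 * m) → ℝ) (hκ : ∀ x, κ (-x) = κ x)
    (hgd : ∀ h, ZZ (fun j k => κ (j - k)) h ≤ ZZ (fun j k => κ (j - k)) 0)
    (hpos : ∀ l, l ≠ 0 → 0 < lam κ l) :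
    (2 * m : ℝ) ^ 2 * ZZ (fun j k => κ (j - k)) 0 ≤
      ∑ σ : ZMod (2 * m) → ({-1, 1} : Finset ℝ),
        Real.exp (-HH (fun j k => κ (j - k)) σ) * (∑ j, (σ j : ℝ)) ^ 2 +
      (∑ l ∈ univ.erase (0 : ZMod (2 * m)), (2 * m : ℝ) / (2 * lam κ l)) *
        ZZ (fun j k => κ (j - k)) 0 := by
  set K : ZMod (2 * m) → ZMod (2 * m) → ℝ := fun j k => κ (j - k) with hK
  have hKs : ∀ j k, K j k = K k j := fun j k => by
    simp only [hK]; rw [← hκ]; congr 1; ring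
  set G : ZMod (2 * m) → ℝ := fun l => ∑ σ : ZMod (2 * m) → ({-1, 1} : Finset ℝ),
    Real.exp (-HH K σ) * ((∑ j, (σ j : ℝ) * CC l j) ^ 2 + (∑ j, (σ j : ℝ) * SS l j) ^ 2) with hG
  have h1 : ∀ l, l ≠ 0 → G l ≤ (2 * m : ℝ) / (2 * lam κ l) * ZZ K 0 := by
    intro l hl
    have a := infrared_eig K hKs hgd (CC l) (lam κ l) (hpos l hl) (eig_C κ hκ l)
    have b := infrared_eig K hKs hgd (SS l) (lam κ l) (hpos l hl) (eig_S κ hκ l)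
    have c : ∑ j, CC l j ^ 2 + ∑ j, SS l j ^ 2 = 2 * m := by
      rw [← Finset.sum_add_distrib]
      simp [CS_sq, ZMod.card]
    simp only [hG, mul_add, Finset.sum_add_distrib]
    refine (add_le_add a b).trans (le_of_eq ?_)
    rw [← c]; ring
  have h2 : ∑ l, G l = (2 * m : ℝ) ^ 2 * ZZ K 0 := by
    simp only [hG]
    rw [Finset.sum_comm, ZZ_zero, Finset.mul_sum]
    refine Finset.sum_congr rfl fun σ _ => ?_
    rw [← Finset.mul_sum, plancherel]
    simp only [spin_sq]
    simp [ZMod.card]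
    ring
  have h3 : G 0 = ∑ σ : ZMod (2 * m) → ({-1, 1} : Finset ℝ),
        Real.exp (-HH K σ) * (∑ j, (σ j : ℝ)) ^ 2 := by
    simp [hG, CC, SS]
  rw [← h2, ← h3, ← Finset.add_sum_erase _ _ (Finset.mem_univ (0 : ZMod (2 * m))),
    Finset.sum_mul]
  refine add_le_add le_rfl (Finset.sum_le_sum fun l hl => h1 l (Finset.ne_of_mem_erase hl))

end cyc

end DysonLRO

namespace DysonLRO

open Finset

section coupling

lemma Jc_congr (α : ℝ) (m : ℕ) (a b c d z : ℤ) (h : a - b = c - d + 2 * m * z) :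
    Jc α m a b = Jc α m c d := by
  unfold Jc
  have hd : (2 * (m : ℤ) ∣ a - b) ↔ (2 * (m : ℤ) ∣ c - d) := by
    rw [h]; exact (Int.dvd_add_left (Dvd.intro _ rfl))
  simp only [hd]
  congr 1
  rw [← (Equiv.addRight z).tsum_eq
    (fun n : ℤ => |(c : ℝ) - (d : ℝ) + 2 * (m : ℝ) * (n : ℝ)| ^ (-α))]
  refine tsum_congr fun n => ?_
  have h' : (a : ℝ) - b = c - d + 2 * m * z := by exact_mod_cast h
  congr 2
  simp only [Equiv.coe_addRight]
  push_cast
  rw [h']; ring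

lemma Jc_symm (α : ℝ) (m : ℕ) (a b : ℤ) : Jc α m a b = Jc α m b a := by
  unfold Jc
  have hd : (2 * (m : ℤ) ∣ a - b) ↔ (2 * (m : ℤ) ∣ b - a) := by
    rw [← dvd_neg, neg_sub]
  simp only [hd]
  congr 1
  rw [← (Equiv.neg ℤ).tsum_eq
    (fun n : ℤ => |(b : ℝ) - (a : ℝ) + 2 * (m : ℝ) * (n : ℝ)| ^ (-α))]
  refine tsum_congr fun n => ?_
  congr 1
  rw [← abs_neg]
  simp only [Equiv.neg_apply]
  push_cast
  congr 1; ring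

lemma Nc_congr (m : ℕ) (a b c d z : ℤ) (h : a - b = c - d + 2 * m * z) :
    Nc m a b = Nc m c d := by
  unfold Nc
  have h1 : (2 * (m : ℤ) ∣ a - b - 1) ↔ (2 * (m : ℤ) ∣ c - d - 1) := by
    rw [show a - b - 1 = (c - d - 1) + 2 * m * z by rw [h]; ring]
    exact (Int.dvd_add_left (Dvd.intro _ rfl))
  have h2 : (2 * (m : ℤ) ∣ a - b + 1) ↔ (2 * (m : ℤ) ∣ c - d + 1) := by
    rw [show a - b + 1 = (c - d + 1) + 2 * m * z by rw [h]; ring]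
    exact (Int.dvd_add_left (Dvd.intro _ rfl))
  simp only [h1, h2]

lemma Nc_symm (m : ℕ) (a b : ℤ) : Nc m a b = Nc m b a := by
  unfold Nc
  have h1 : (2 * (m : ℤ) ∣ a - b - 1) ↔ (2 * (m : ℤ) ∣ b - a + 1) := by
    rw [← dvd_neg, show -(a - b - 1) = b - a + 1 by ring]
  have h2 : (2 * (m : ℤ) ∣ a - b + 1) ↔ (2 * (m : ℤ) ∣ b - a - 1) := by
    rw [← dvd_neg, show -(a - b + 1) = b - a - 1 by ring]
  simp only [h1, h2, or_comm]

lemma Kc_congr (α γ ε : ℝ) (m : ℕ) (a b c d z : ℤ) (h : a - b = c - d + 2 * m * z) :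
    Kc α γ ε m a b = Kc α γ ε m c d := by
  unfold Kc
  rw [Jc_congr α m a b c d z h, Nc_congr m a b c d z h]

lemma Kc_symm (α γ ε : ℝ) (m : ℕ) (a b : ℤ) : Kc α γ ε m a b = Kc α γ ε m b a := by
  unfold Kc
  rw [Jc_symm, Nc_symm]

lemma Jc_nonneg (α : ℝ) (m : ℕ) (a b : ℤ) : 0 ≤ Jc α m a b := by
  unfold Jc
  split_ifs
  · exact le_rfl
  · exact tsum_nonneg fun n => Real.rpow_nonneg (abs_nonneg _) _

lemma Nc_nonneg (m : ℕ) (a b : ℤ) : 0 ≤ Nc m a b := by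
  unfold Nc
  split_ifs <;> norm_num

lemma Jc_summable (α : ℝ) (hα : 1 < α) (m : ℕ) (hm : 1 ≤ m) (x : ℝ) :
    Summable (fun n : ℤ => |x + 2 * (m : ℝ) * (n : ℝ)| ^ (-α)) := by
  have h := ((Real.summable_one_div_int_add_rpow (x / (2 * m)) α).2 hα).mul_left
    ((2 * m : ℝ) ^ (-α))
  have hm0 : (0 : ℝ) < 2 * m := by positivity
  refine h.congr fun n => ?_
  have e : x + 2 * (m : ℝ) * n = (2 * m) * (n + x / (2 * m)) := by
    field_simp; ring
  rw [e, abs_mul, abs_of_pos hm0, Real.mul_rpow hm0.le (abs_nonneg _),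
    Real.rpow_neg (abs_nonneg _), one_div]

/-- Positive definiteness of `(b_p + b_q)^(-α)`. -/
lemma power_psd (α : ℝ) (hα : 1 < α) {P : Type*} [Fintype P] (b : P → ℝ) (hb : ∀ p, 0 < b p)
    (c : P → ℝ) : 0 ≤ ∑ p, ∑ q, c p * c q * (b p + b q) ^ (-α) := by
  have hG : 0 < Real.Gamma α := Real.Gamma_pos_of_pos (by linarith)
  have hint : ∀ r : ℝ, 0 < r → MeasureTheory.IntegrableOn
      (fun t : ℝ => t ^ (α - 1) * Real.exp (-(r * t))) (Set.Ioi 0) MeasureTheory.volume := by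
    intro r hr
    have := integrableOn_rpow_mul_exp_neg_mul_rpow (p := 1) (s := α - 1) (b := r)
      (by linarith) one_pos hr
    simpa only [Real.rpow_one, neg_mul] using this
  have e : ∀ r : ℝ, 0 < r → r ^ (-α) =
      (∫ t in Set.Ioi (0 : ℝ), t ^ (α - 1) * Real.exp (-(r * t))) / Real.Gamma α := by
    intro r hr
    rw [Real.integral_rpow_mul_exp_neg_mul_Ioi (by linarith) hr, mul_div_assoc,
      div_self hG.ne', mul_one, one_div, Real.inv_rpow hr.le, Real.rpow_neg hr.le]
  have h1 : ∑ p, ∑ q, c p * c q * (b p + b q) ^ (-α) =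
      (∫ t in Set.Ioi (0 : ℝ), ∑ p, ∑ q, c p * c q *
        (t ^ (α - 1) * Real.exp (-((b p + b q) * t)))) / Real.Gamma α := by
    rw [MeasureTheory.integral_finsetSum, Finset.sum_div]
    · refine Finset.sum_congr rfl fun p _ => ?_
      rw [MeasureTheory.integral_finsetSum, Finset.sum_div]
      · refine Finset.sum_congr rfl fun q _ => ?_
        rw [MeasureTheory.integral_const_mul, e _ (add_pos (hb p) (hb q)), mul_div_assoc]
      · intro q _
        exact (hint _ (add_pos (hb p) (hb q))).const_mul _
    · intro p _
      refine MeasureTheory.integrable_finsetSum _ fun q _ => ?_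
      exact (hint _ (add_pos (hb p) (hb q))).const_mul _
  rw [h1]
  refine div_nonneg (MeasureTheory.setIntegral_nonneg measurableSet_Ioi fun t ht => ?_) hG.le
  have e2 : ∑ p, ∑ q, c p * c q * (t ^ (α - 1) * Real.exp (-((b p + b q) * t))) =
      t ^ (α - 1) * (∑ p, c p * Real.exp (-(b p * t))) ^ 2 := by
    rw [sq, Finset.sum_mul_sum, Finset.mul_sum]
    refine Finset.sum_congr rfl fun p _ => ?_
    rw [Finset.mul_sum]
    refine Finset.sum_congr rfl fun q _ => ?_
    rw [add_mul, neg_add, Real.exp_add]; ring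
  rw [e2]
  exact mul_nonneg (Real.rpow_nonneg (le_of_lt ht) _) (sq_nonneg _)

lemma Jc_psd (α : ℝ) (hα : 1 < α) (m : ℕ) (hm : 1 ≤ m) {P : Type*} [Fintype P] (a : P → ℕ)
    (ha : ∀ p, a p < m) (c : P → ℝ) :
    0 ≤ ∑ p, ∑ q, c p * c q * Jc α m ((a p + a q + 1 : ℕ) : ℤ) 0 := by
  have hJ : ∀ p q, HasSum (fun n : ℤ =>
      |((a p + a q + 1 : ℕ) : ℝ) + 2 * (m : ℝ) * (n : ℝ)| ^ (-α))
      (Jc α m ((a p + a q + 1 : ℕ) : ℤ) 0) := by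
    intro p q
    have hd : ¬ (2 * (m : ℤ) ∣ ((a p + a q + 1 : ℕ) : ℤ) - 0) := by
      intro h
      rw [sub_zero] at h
      have := Int.le_of_dvd (by positivity) h
      have := ha p; have := ha q
      push_cast at *
      omega
    unfold Jc
    rw [if_neg hd]
    convert (Jc_summable α hα m hm ((a p + a q + 1 : ℕ) : ℝ)).hasSum using 5
    push_cast; ring
  have hs : HasSum (fun n : ℤ => ∑ p, ∑ q, c p * c q *
      |((a p + a q + 1 : ℕ) : ℝ) + 2 * (m : ℝ) * (n : ℝ)| ^ (-α))
      (∑ p, ∑ q, c p * c q * Jc α m ((a p + a q + 1 : ℕ) : ℤ) 0) :=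
    hasSum_sum fun p _ => hasSum_sum fun q _ => (hJ p q).mul_left _
  refine hs.nonneg fun n => ?_
  have hm1 : (1 : ℝ) ≤ m := by exact_mod_cast hm
  rcases le_or_gt 0 n with hn | hn
  · have hn' : (0 : ℝ) ≤ n := by exact_mod_cast hn
    have hb : ∀ p, (0 : ℝ) < a p + 1 / 2 + m * n := fun p => by positivity
    have := power_psd α hα (fun p => (a p : ℝ) + 1 / 2 + m * n) hb c
    refine this.trans (le_of_eq ?_)
    refine Finset.sum_congr rfl fun p _ => Finset.sum_congr rfl fun q _ => ?_
    congr 2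
    rw [abs_of_nonneg (by positivity)]
    push_cast; ring
  · have hn' : (n : ℝ) ≤ -1 := by exact_mod_cast (show n ≤ -1 by omega)
    have hb : ∀ p, (0 : ℝ) < -(a p + 1 / 2 + m * n) := fun p => by
      have h1 : (a p : ℝ) + 1 ≤ m := by exact_mod_cast ha p
      nlinarith
    have := power_psd α hα (fun p => -((a p : ℝ) + 1 / 2 + m * n)) hb c
    refine this.trans (le_of_eq ?_)
    refine Finset.sum_congr rfl fun p _ => Finset.sum_congr rfl fun q _ => ?_
    congr 2
    have := hb p
    have := hb q
    rw [abs_of_nonpos (by push_cast; linarith)]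
    push_cast; ring

lemma Nc_psd (m : ℕ) (hm : 1 ≤ m) {P : Type*} [Fintype P] (a : P → ℕ)
    (ha : ∀ p, a p < m) (c : P → ℝ) :
    0 ≤ ∑ p, ∑ q, c p * c q * Nc m ((a p + a q + 1 : ℕ) : ℤ) 0 := by
  have hN : ∀ p q, Nc m ((a p + a q + 1 : ℕ) : ℤ) 0 =
      (if a p = 0 then 1 else 0) * (if a q = 0 then 1 else 0) +
      (if a p ≠ 0 ∧ a p + 1 = m then 1 else 0) * (if a q ≠ 0 ∧ a q + 1 = m then 1 else 0) := by
    intro p q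
    have hp := ha p
    have hq := ha q
    unfold Nc
    have h1 : (2 * (m : ℤ) ∣ ((a p + a q + 1 : ℕ) : ℤ) - 0 - 1) ↔ (a p = 0 ∧ a q = 0) := by
      constructor
      · rintro ⟨z, hz⟩
        push_cast at hz
        have h0 : z < 1 := by by_contra h; nlinarith
        have h00 : -1 < z := by by_contra h; nlinarith
        have : z = 0 := by omega
        subst this
        omega
      · rintro ⟨h, h'⟩; simp [h, h']
    have h2 : (2 * (m : ℤ) ∣ ((a p + a q + 1 : ℕ) : ℤ) - 0 + 1) ↔
        (a p + 1 = m ∧ a q + 1 = m) := by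
      constructor
      · rintro ⟨z, hz⟩
        push_cast at hz
        have h0 : z < 2 := by by_contra h; nlinarith
        have h00 : 0 < z := by by_contra h; nlinarith
        have : z = 1 := by omega
        subst this
        omega
      · rintro ⟨h, h'⟩
        refine ⟨1, ?_⟩
        push_cast; omega
    simp only [h1, h2]
    by_cases x1 : a p = 0 <;> by_cases x2 : a q = 0 <;> by_cases x3 : a p + 1 = m <;>
      by_cases x4 : a q + 1 = m <;> simp [x1, x2, x3, x4] <;> omega
  have e : ∑ p, ∑ q, c p * c q * Nc m ((a p + a q + 1 : ℕ) : ℤ) 0 =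
      (∑ p, c p * (if a p = 0 then 1 else 0)) ^ 2 +
      (∑ p, c p * (if a p ≠ 0 ∧ a p + 1 = m then 1 else 0)) ^ 2 := by
    rw [sq, sq, Finset.sum_mul_sum, Finset.sum_mul_sum]
    simp only [← Finset.sum_add_distrib]
    refine Finset.sum_congr rfl fun p _ => Finset.sum_congr rfl fun q _ => ?_
    rw [hN]; ring
  rw [e]; positivity

/-- The coupling as a function on `ZMod (2m)`. -/
noncomputable def kap (α γ ε : ℝ) (m : ℕ) (x : ZMod (2 * m)) : ℝ := Kc α γ ε m (x.val : ℤ) 0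

lemma Kc_eq_kap (α γ ε : ℝ) (m : ℕ) (hm : 1 ≤ m) (j k : ℤ) :
    Kc α γ ε m j k = kap α γ ε m ((j : ZMod (2 * m)) - (k : ZMod (2 * m))) := by
  haveI : NeZero (2 * m) := ⟨by omega⟩
  unfold kap
  have h : (((j - k) : ℤ) : ZMod (2 * m)) =
      (((((j : ZMod (2 * m)) - (k : ZMod (2 * m))).val : ℕ) : ℤ) : ZMod (2 * m)) := by
    push_cast [ZMod.natCast_zmod_val]; rfl
  rw [ZMod.intCast_eq_intCast_iff_dvd_sub] at h
  obtain ⟨z, hz⟩ := h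
  refine Kc_congr α γ ε m _ _ _ _ (-z) ?_
  push_cast at hz
  linarith

lemma kap_natCast (α γ ε : ℝ) (m : ℕ) (hm : 1 ≤ m) (n : ℕ) :
    kap α γ ε m (n : ZMod (2 * m)) = Kc α γ ε m n 0 := by
  rw [Kc_eq_kap α γ ε m hm]; simp

lemma kap_neg (α γ ε : ℝ) (m : ℕ) (hm : 1 ≤ m) (x : ZMod (2 * m)) :
    kap α γ ε m (-x) = kap α γ ε m x := by
  haveI : NeZero (2 * m) := ⟨by omega⟩
  have h1 := Kc_eq_kap α γ ε m hm (x.val : ℤ) 0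
  have h2 := Kc_eq_kap α γ ε m hm 0 (x.val : ℤ)
  rw [Kc_symm] at h1
  rw [h1] at h2
  simpa using h2.symm

lemma kap_nonneg (α γ ε : ℝ) (hε : 0 ≤ ε) (hγ : ε ≤ γ) (m : ℕ) (x : ZMod (2 * m)) :
    0 ≤ kap α γ ε m x := by
  unfold kap Kc
  have := Nc_nonneg m (x.val : ℤ) 0
  have := Jc_nonneg α m (x.val : ℤ) 0
  have : 0 ≤ γ - ε := by linarith
  positivity

lemma kap_psd (α γ ε : ℝ) (hα : 1 < α) (hε : 0 ≤ ε) (hγ : ε ≤ γ) (m : ℕ) (hm : 1 ≤ m)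
    (P : Type) [Fintype P] (a : P → ℕ) (ha : ∀ p, a p < m) (c : P → ℝ) :
    0 ≤ ∑ p, ∑ q, c p * c q * kap α γ ε m ((a p + a q + 1 : ℕ) : ZMod (2 * m)) := by
  have e : ∑ p, ∑ q, c p * c q * kap α γ ε m ((a p + a q + 1 : ℕ) : ZMod (2 * m)) =
      (γ - ε) * (∑ p, ∑ q, c p * c q * Nc m ((a p + a q + 1 : ℕ) : ℤ) 0) +
      ε * (∑ p, ∑ q, c p * c q * Jc α m ((a p + a q + 1 : ℕ) : ℤ) 0) := by
    simp only [Finset.mul_sum, ← Finset.sum_add_distrib]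
    refine Finset.sum_congr rfl fun p _ => Finset.sum_congr rfl fun q _ => ?_
    rw [kap_natCast α γ ε m hm]; unfold Kc; ring
  rw [e]
  exact add_nonneg (mul_nonneg (by linarith) (Nc_psd m hm a ha c))
    (mul_nonneg hε (Jc_psd α hα m hm a ha c))

end coupling
end DysonLRO

namespace DysonLRO

open Finset

lemma Jc_ge (α : ℝ) (hα : 1 < α) (m : ℕ) (x : ℕ) (hx : 1 ≤ x) (hxm : x ≤ m) :
    (x : ℝ) ^ (-α) ≤ Jc α m (x : ℤ) 0 := by
  unfold Jc
  rw [if_neg]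
  · have hs := Jc_summable α hα m (hx.trans hxm) ((x : ℤ) - (0 : ℤ) : ℝ)
    have := hs.le_tsum 0 (fun n _ => Real.rpow_nonneg (abs_nonneg _) _)
    simpa using this
  · rintro ⟨c, hc⟩
    have h1 : (0 : ℤ) < c := by
      by_contra h
      push Not at h
      nlinarith
    have : (2 * (m : ℤ)) * 1 ≤ 2 * m * c := by
      apply mul_le_mul_of_nonneg_left <;> omega
    omega

lemma Kc_ge (α γ ε : ℝ) (hα : 1 < α) (hε : 0 ≤ ε) (hγ : ε ≤ γ) (m : ℕ) (x : ℕ) (hx : 1 ≤ x)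
    (hxm : x ≤ m) :
    (if x = 1 then (γ - ε) else 0) + ε * (x : ℝ) ^ (-α) ≤ Kc α γ ε m (x : ℤ) 0 := by
  unfold Kc
  have h1 := mul_le_mul_of_nonneg_left (Jc_ge α hα m x hx hxm) hε
  have h2 : (if x = 1 then (γ - ε) else 0) ≤ (γ - ε) * Nc m (x : ℤ) 0 := by
    split_ifs with h
    · subst h
      simp [Nc]
    · exact mul_nonneg (by linarith) (Nc_nonneg _ _ _)
  linarith

section cyc
variable {m : ℕ} [NeZero (2 * m)]

lemma CC_nat (l x : ℕ) :
    CC (l : ZMod (2 * m)) (x : ZMod (2 * m)) = Real.cos (Real.pi * (l / m * x)) := by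
  unfold CC
  have h := ZMod.stdAddChar_coe (N := 2 * m) ((l * x : ℕ) : ℤ)
  push_cast at h
  have hm : (m : ℂ) ≠ 0 := by
    have := NeZero.ne (2 * m)
    intro h; apply this; have : m = 0 := by exact_mod_cast h
    omega
  rw [h, show (2 * (Real.pi : ℂ) * Complex.I * (l * x) / (2 * m)) =
    ((Real.pi * (l / m * x) : ℝ) : ℂ) * Complex.I by push_cast; field_simp]
  rw [Complex.exp_ofReal_mul_I_re]

lemma CC_le_one (l x : ZMod (2 * m)) : CC l x ≤ 1 := by
  nlinarith [CS_sq l x, sq_nonneg (SS l x), sq_nonneg (CC l x - 1)]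

lemma lam_neg (κ : ZMod (2 * m) → ℝ) (l : ZMod (2 * m)) : lam κ (-l) = lam κ l := by
  unfold lam
  refine Finset.sum_congr rfl fun x _ => ?_
  have : CC (-l) x = CC l (-x) := by unfold CC; congr 2; ring
  rw [this, CC_neg]

lemma cast_inj {a b : ℕ} (ha : a < 2 * m) (hb : b < 2 * m)
    (h : (a : ZMod (2 * m)) = (b : ZMod (2 * m))) : a = b := by
  have := congrArg ZMod.val h
  rwa [ZMod.val_cast_of_lt ha, ZMod.val_cast_of_lt hb] at this

lemma sum_sq_ge (n : ℕ) : (n : ℝ) ^ 3 / 3 ≤ ∑ x ∈ Icc 1 n, (x : ℝ) ^ 2 := by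
  induction n with
  | zero => simp
  | succ k ih =>
    rw [Finset.sum_Icc_succ_top (by omega)]
    push_cast
    have : (0 : ℝ) ≤ k := by positivity
    nlinarith

lemma lam_ge (α γ ε : ℝ) (hα : 1 < α) (hε : 0 < ε) (hγ : ε ≤ γ) (l : ℕ) (hl : 1 ≤ l)
    (hlm : l ≤ m) :
    2 * (γ - ε) * ((l : ℝ) / m) ^ 2 + ε / 12 * ((l : ℝ) / m) ^ (α - 1) ≤
      lam (kap α γ ε m) (l : ZMod (2 * m)) := by
  have hm : 1 ≤ m := hl.trans hlm
  set n := m / l with hn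
  have hn1 : 1 ≤ n := (Nat.one_le_div_iff (by omega)).2 hlm
  have hnm : n ≤ m := Nat.div_le_self _ _
  have hm0 : (0 : ℝ) < m := by exact_mod_cast hm
  have hl0 : (0 : ℝ) < l := by exact_mod_cast hl
  set u : ℝ := (l : ℝ) / m with hu
  have hu0 : 0 < u := by positivity
  have hnl : (n : ℝ) * l ≤ m := by exact_mod_cast Nat.div_mul_le_self m l
  have hnl2 : (m : ℝ) ≤ 2 * n * l := by
    have h1 := Nat.lt_div_mul_add (a := m) (b := l) (by omega)
    rw [← hn] at h1
    have h2 : m ≤ 2 * n * l := by nlinarith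
    exact_mod_cast h2
  have hun : u * n ≤ 1 := by
    rw [hu, div_mul_eq_mul_div, div_le_one hm0]; linarith
  have hun2 : 1 ≤ 2 * (u * n) := by
    rw [hu, div_mul_eq_mul_div, ← mul_div_assoc, le_div_iff₀ hm0]; linarith
  have hκ0 := kap_nonneg α γ ε hε.le hγ m
  have h1 : ∑ x ∈ (Icc 1 n).image (fun x : ℕ => (x : ZMod (2 * m))),
      kap α γ ε m x * (1 - CC (l : ZMod (2 * m)) x) ≤ lam (kap α γ ε m) (l : ZMod (2 * m)) := by
    unfold lam
    exact Finset.sum_le_sum_of_subset_of_nonneg (Finset.subset_univ _) fun x _ _ =>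
      mul_nonneg (hκ0 x) (by linarith [CC_le_one (l : ZMod (2 * m)) x])
  rw [Finset.sum_image] at h1
  swap
  · intro a ha b hb hab
    simp only [Finset.coe_Icc, Set.mem_Icc] at ha hb
    exact cast_inj (by omega) (by omega) hab
  refine le_trans ?_ h1
  have h2 : ∀ x ∈ Icc 1 n, (if x = 1 then 2 * (γ - ε) * u ^ 2 else 0) +
      (ε * u ^ α * 2 * u ^ 2) * (x : ℝ) ^ 2 ≤
      kap α γ ε m (x : ZMod (2 * m)) * (1 - CC (l : ZMod (2 * m)) (x : ZMod (2 * m))) := by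
    intro x hx
    rw [Finset.mem_Icc] at hx
    have hx0 : (0 : ℝ) < x := by exact_mod_cast hx.1
    have hxn : (x : ℝ) ≤ n := by exact_mod_cast hx.2
    have hux : u * x ≤ 1 := by nlinarith
    rw [kap_natCast α γ ε m hm, CC_nat, ← hu]
    have hk := Kc_ge α γ ε hα hε.le hγ m x hx.1 (by omega)
    have hc : 2 * u ^ 2 * x ^ 2 ≤ 1 - Real.cos (Real.pi * (u * x)) := by
      have := Real.cos_le_one_sub_mul_cos_sq (x := Real.pi * (u * x)) (by
        rw [abs_of_nonneg (by positivity)]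
        exact mul_le_of_le_one_right Real.pi_pos.le hux)
      have e : 2 / Real.pi ^ 2 * (Real.pi * (u * x)) ^ 2 = 2 * u ^ 2 * x ^ 2 := by
        have := Real.pi_ne_zero
        field_simp
      linarith
    have hp : u ^ α ≤ (x : ℝ) ^ (-α) := by
      rw [Real.rpow_neg hx0.le, ← Real.inv_rpow hx0.le]
      apply Real.rpow_le_rpow hu0.le _ (by linarith)
      rw [le_inv_comm₀ hu0 hx0, ← one_div, le_div_iff₀ hu0]; linarith
    have hk2 : (if x = 1 then (γ - ε) else 0) + ε * u ^ α ≤ Kc α γ ε m (x : ℤ) 0 :=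
      le_trans (by have := mul_le_mul_of_nonneg_left hp hε.le; linarith) hk
    have hpos : 0 ≤ Kc α γ ε m (x : ℤ) 0 := by
      refine le_trans ?_ hk2
      have : 0 ≤ γ - ε := by linarith
      split_ifs <;> positivity
    refine le_trans ?_ (mul_le_mul hk2 hc (by positivity) hpos)
    split_ifs with h
    · subst h; apply le_of_eq; push_cast; ring
    · apply le_of_eq; ring
  refine le_trans ?_ (Finset.sum_le_sum h2)
  rw [Finset.sum_add_distrib, ← Finset.mul_sum, Finset.sum_ite_eq', if_pos (by simp [hn1])]
  have h3 := sum_sq_ge n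
  have hua : 0 < u ^ (α - 1) := Real.rpow_pos_of_pos hu0 _
  have e : u ^ α = u ^ (α - 1) * u := by
    rw [← Real.rpow_add_one hu0.ne']; congr 1; ring
  have h4 : (1 : ℝ) ≤ 8 * (u * n) ^ 3 := by
    have := one_le_pow₀ hun2 (n := 3)
    nlinarith
  have h5 : ε / 12 * u ^ (α - 1) ≤ (ε * u ^ α * 2 * u ^ 2) * ((n : ℝ) ^ 3 / 3) := by
    rw [e]
    have := mul_le_mul_of_nonneg_left h4 (show 0 ≤ ε / 12 * u ^ (α - 1) by positivity)
    nlinarith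
  have h6 := mul_le_mul_of_nonneg_left h3 (show 0 ≤ ε * u ^ α * 2 * u ^ 2 by positivity)
  linarith

lemma sum_erase_le (f : ZMod (2 * m) → ℝ) (hf0 : ∀ l, 0 ≤ f l)
    (hf : ∀ l, f (-l) = f l) :
    ∑ l ∈ univ.erase (0 : ZMod (2 * m)), f l ≤
      2 * ∑ k ∈ Icc 1 m, f ((k : ℕ) : ZMod (2 * m)) := by
  have hm := NeZero.ne (2 * m)
  have hsub : univ.erase (0 : ZMod (2 * m)) ⊆
      (Icc 1 m).image (fun x : ℕ => (x : ZMod (2 * m))) ∪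
      (Icc 1 m).image (fun x : ℕ => -(x : ZMod (2 * m))) := by
    intro l hl
    have hl0 : l ≠ 0 := (Finset.mem_erase.1 hl).1
    have hv : l.val ≠ 0 := fun h => hl0 ((ZMod.val_eq_zero l).1 h)
    have hlt := ZMod.val_lt l
    rw [Finset.mem_union, Finset.mem_image, Finset.mem_image]
    by_cases h : l.val ≤ m
    · left
      exact ⟨l.val, by rw [Finset.mem_Icc]; omega, by simp⟩
    · right
      refine ⟨2 * m - l.val, by rw [Finset.mem_Icc]; omega, ?_⟩
      rw [Nat.cast_sub hlt.le]
      rw [ZMod.natCast_self]; simp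
  refine (Finset.sum_le_sum_of_subset_of_nonneg hsub fun l _ _ => hf0 l).trans ?_
  have h := Finset.sum_union_inter (f := f)
    (s₁ := (Icc 1 m).image (fun x : ℕ => (x : ZMod (2 * m))))
    (s₂ := (Icc 1 m).image (fun x : ℕ => -(x : ZMod (2 * m))))
  rw [Finset.sum_image (g := fun x : ℕ => (x : ZMod (2 * m))),
    Finset.sum_image (g := fun x : ℕ => -(x : ZMod (2 * m)))] at h
  · simp only [hf] at h
    have := Finset.sum_nonneg (s := (Icc 1 m).image (fun x : ℕ => (x : ZMod (2 * m))) ∩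
      (Icc 1 m).image (fun x : ℕ => -(x : ZMod (2 * m)))) fun l _ => hf0 l
    linarith
  · intro a ha b hb hab
    simp only [Finset.coe_Icc, Set.mem_Icc] at ha hb
    exact cast_inj (by omega) (by omega) (neg_injective hab)
  · intro a ha b hb hab
    simp only [Finset.coe_Icc, Set.mem_Icc] at ha hb
    exact cast_inj (by omega) (by omega) hab

end cyc

lemma analytic (s β B : ℝ) (hβ : 0 < β) (hβs : β < s) (hs : s < 1) (hB : 0 < B) :
    ∃ A₀ : ℝ, 0 < A₀ ∧ ∀ A, A₀ ≤ A → ∀ u : ℝ, 0 < u → u ≤ 1 →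
      u ^ s / (1 - s) ≤ A * u ^ 2 + B * u ^ β := by
  have h1s : 0 < 1 - s := by linarith
  set u0 : ℝ := (B * (1 - s)) ^ (1 / (s - β)) with hu0
  have hBs : 0 < B * (1 - s) := by positivity
  have hu0p : 0 < u0 := Real.rpow_pos_of_pos hBs _
  refine ⟨1 / ((1 - s) * u0 ^ 2), by positivity, fun A hA u hu hu1 => ?_⟩
  have hub : 0 < u ^ β := Real.rpow_pos_of_pos hu _
  have hA0 : 0 ≤ A := le_trans (by positivity) hA
  by_cases h : u ≤ u0
  · have h1 : u ^ (s - β) ≤ B * (1 - s) := by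
      have := Real.rpow_le_rpow hu.le h (show 0 ≤ s - β by linarith)
      rwa [hu0, ← Real.rpow_mul hBs.le, one_div_mul_cancel (by linarith), Real.rpow_one] at this
    have e : u ^ s = u ^ (s - β) * u ^ β := by
      rw [← Real.rpow_add hu]; congr 1; ring
    have h2 : u ^ s / (1 - s) ≤ B * u ^ β := by
      rw [div_le_iff₀ h1s, e]
      have := mul_le_mul_of_nonneg_right h1 hub.le
      linarith
    have : 0 ≤ A * u ^ 2 := by positivity
    linarith
  · push Not at h
    have h1 : u ^ s ≤ 1 := Real.rpow_le_one hu.le hu1 (by linarith)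
    have h2 : 1 / (1 - s) ≤ A * u ^ 2 := by
      have h3 : u0 ^ 2 ≤ u ^ 2 := pow_le_pow_left₀ hu0p.le h.le 2
      calc 1 / (1 - s) = 1 / ((1 - s) * u0 ^ 2) * u0 ^ 2 := by field_simp
        _ ≤ A * u ^ 2 := mul_le_mul hA h3 (by positivity) hA0
    have h4 : u ^ s / (1 - s) ≤ 1 / (1 - s) := by gcongr
    have : 0 ≤ B * u ^ β := by positivity
    linarith

lemma sum_rpow_le (s : ℝ) (hs0 : 0 ≤ s) (hs : s < 1) (m : ℕ) :
    ∑ l ∈ Icc 1 m, (1 - s) * (l : ℝ) ^ (-s) ≤ (m : ℝ) ^ (1 - s) := by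
  induction m with
  | zero => simp; positivity
  | succ k ih =>
    rw [Finset.sum_Icc_succ_top (by omega)]
    have hk : (0 : ℝ) < k + 1 := by positivity
    have h := rpow_one_add_le_one_add_mul_self (s := -(1 / ((k : ℝ) + 1)))
      (by rw [neg_le_neg_iff, div_le_one hk]; linarith [(Nat.cast_nonneg k : (0 : ℝ) ≤ k)])
      (p := 1 - s) (by linarith) (by linarith)
    have e1 : (1 : ℝ) + -(1 / ((k : ℝ) + 1)) = k / (k + 1) := by field_simp; ring
    rw [e1, Real.div_rpow (by positivity) hk.le, div_le_iff₀ (by positivity)] at h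
    have e2 : ((k : ℝ) + 1) ^ (1 - s) = (k + 1) * (k + 1) ^ (-s) := by
      rw [show (1 : ℝ) - s = 1 + -s by ring, Real.rpow_add hk, Real.rpow_one]
    push_cast
    have e3 : (1 + (1 - s) * -(1 / ((k : ℝ) + 1))) * (k + 1) ^ (1 - s) =
      (k + 1) ^ (1 - s) - (1 - s) * (k + 1) ^ (-s) := by
      rw [e2]; field_simp; ring
    rw [e3] at h
    linarith

/-- Site sums equal sums over the cyclic group. -/
noncomputable def siteEquiv (m : ℕ) (hm : 1 ≤ m) : Site m ≃ ZMod (2 * m) :=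
  haveI : NeZero (2 * m) := ⟨by omega⟩
  Equiv.ofBijective (fun j : Site m => ((j : ℤ) : ZMod (2 * m))) (by
    rw [Fintype.bijective_iff_injective_and_card]
    constructor
    · intro a b hab
      have ha := Finset.mem_Icc.1 a.2
      have hb := Finset.mem_Icc.1 b.2
      have h := (ZMod.intCast_eq_intCast_iff_dvd_sub _ _ _).1 hab
      apply Subtype.ext
      obtain ⟨c, hc⟩ := h
      push_cast at hc
      have h1 : c < 1 := by
        by_contra h
        push Not at h
        nlinarith
      have h2 : -1 < c := by
        by_contra h
        push Not at h
        nlinarith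
      have : c = 0 := by omega
      subst this
      linarith
    · rw [ZMod.card, Fintype.card_coe, Int.card_Icc]
      omega)

lemma siteEquiv_apply (m : ℕ) (hm : 1 ≤ m) (j : Site m) :
    siteEquiv m hm j = ((j : ℤ) : ZMod (2 * m)) := rfl

lemma Hc_eq (α γ ε : ℝ) (m : ℕ) [NeZero (2 * m)] (hm : 1 ≤ m)
    (σ : ZMod (2 * m) → ({-1, 1} : Finset ℝ)) :
    Hc α γ ε m (fun j => σ (siteEquiv m hm j)) = HH (fun j k => kap α γ ε m (j - k)) σ := by
  unfold Hc HH
  congr 1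
  refine Fintype.sum_equiv (siteEquiv m hm) _ _ fun j => ?_
  refine Fintype.sum_equiv (siteEquiv m hm) _ _ fun k => ?_
  rw [Kc_eq_kap α γ ε m hm, siteEquiv_apply, siteEquiv_apply]
  rfl

lemma sum_corr (α γ ε : ℝ) (m : ℕ) [NeZero (2 * m)] (hm : 1 ≤ m) :
    ∑ j : Site m, ∑ k : Site m, corr α γ ε m j k =
      (∑ σ : ZMod (2 * m) → ({-1, 1} : Finset ℝ),
        Real.exp (-HH (fun j k => kap α γ ε m (j - k)) σ) * (∑ j, (σ j : ℝ)) ^ 2) /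
        ZZ (fun j k => kap α γ ε m (j - k)) 0 := by
  have hE : ∀ F : Spin m → ℝ, ∑ σ : Spin m, F σ =
      ∑ σ : ZMod (2 * m) → ({-1, 1} : Finset ℝ), F (fun j => σ (siteEquiv m hm j)) := fun F =>
    (Fintype.sum_equiv ((siteEquiv m hm).symm.arrowCongr (Equiv.refl _)) _ _ fun σ => rfl).symm
  unfold corr
  simp only [← Finset.sum_div]
  congr 1
  · have h1 : ∑ j : Site m, ∑ k : Site m, ∑ σ : Spin m,
        (σ j : ℝ) * (σ k : ℝ) * Real.exp (-Hc α γ ε m σ) =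
        ∑ σ : Spin m, Real.exp (-Hc α γ ε m σ) * (∑ j, (σ j : ℝ)) ^ 2 := by
      rw [Finset.sum_congr rfl fun j _ => Finset.sum_comm, Finset.sum_comm]
      refine Finset.sum_congr rfl fun σ _ => ?_
      rw [sq, Finset.sum_mul_sum, Finset.mul_sum]
      refine Finset.sum_congr rfl fun j _ => ?_
      rw [Finset.mul_sum]
      exact Finset.sum_congr rfl fun k _ => by ring
    rw [h1, hE]
    refine Finset.sum_congr rfl fun σ _ => ?_
    rw [Hc_eq]
    congr 2
    exact Fintype.sum_equiv (siteEquiv m hm) _ _ fun j => rfl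
  · rw [ZZ_zero, hE]
    simp only [Hc_eq]

end DysonLRO
/-- Long-range order for the Dyson-Ising ferromagnet with `1 < α < 2`: for
every `ε > 0` there is `γ₀ ≥ ε` such that for all `γ > γ₀` the averaged
two-point function is bounded below by some `δ > 0` uniformly in the volume. -/
theorem long_range_order (α ε : ℝ) (hα1 : 1 < α) (hα2 : α < 2) (hε : 0 < ε) :
    ∃ γ₀ : ℝ, ε ≤ γ₀ ∧ ∀ γ : ℝ, γ₀ < γ →
      ∃ δ : ℝ, 0 < δ ∧ ∀ m : ℕ, 1 ≤ m →
        δ ≤ (1 / (2 * (m : ℝ)) ^ 2) *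
          ∑ j : Site m, ∑ k : Site m, corr α γ ε m j k := by
  obtain ⟨A₀, hA₀, hA⟩ := DysonLRO.analytic (α / 2) (α - 1) (ε / 12) (by linarith) (by linarith)
    (by linarith) (by linarith)
  refine ⟨ε + A₀ / 2, by linarith, fun γ hγ => ⟨1 / 2, by norm_num, fun m hm => ?_⟩⟩
  haveI : NeZero (2 * m) := ⟨by omega⟩
  have hεγ : ε ≤ γ := by linarith
  have hm0 : (0 : ℝ) < m := by exact_mod_cast hm
  set s := α / 2 with hs
  have h1s : 0 < 1 - s := by rw [hs]; linarith
  set κ := DysonLRO.kap α γ ε m with hκ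
  have hκn : ∀ x, κ (-x) = κ x := DysonLRO.kap_neg α γ ε m hm
  have hgd := DysonLRO.gaussian_domination κ (DysonLRO.kap_nonneg α γ ε hε.le hεγ m) hκn
    (fun P _ a ha c => DysonLRO.kap_psd α γ ε hα1 hε.le hεγ m hm P a ha c)
  have hlam : ∀ l : ℕ, 1 ≤ l → l ≤ m → ((l : ℝ) / m) ^ s / (1 - s) ≤
      DysonLRO.lam κ (l : ZMod (2 * m)) := by
    intro l hl hlm
    have hl0 : (0 : ℝ) < l := by exact_mod_cast hl
    have hlm' : (l : ℝ) ≤ m := by exact_mod_cast hlm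
    refine (hA (2 * (γ - ε)) (by linarith) ((l : ℝ) / m) (by positivity)
      ((div_le_one hm0).2 hlm')).trans ?_
    exact DysonLRO.lam_ge α γ ε hα1 hε hεγ l hl hlm
  have hlampos : ∀ l : ℕ, 1 ≤ l → l ≤ m → 0 < DysonLRO.lam κ (l : ZMod (2 * m)) := by
    intro l hl hlm
    have hl0 : (0 : ℝ) < l := by exact_mod_cast hl
    exact lt_of_lt_of_le (by positivity) (hlam l hl hlm)
  have hpos : ∀ l, l ≠ 0 → 0 < DysonLRO.lam κ l := by
    intro l hl
    have hv : l.val ≠ 0 := fun h => hl ((ZMod.val_eq_zero l).1 h)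
    have hlt := ZMod.val_lt l
    by_cases h : l.val ≤ m
    · have := hlampos l.val (by omega) h
      simpa using this
    · have := hlampos (2 * m - l.val) (by omega) (by omega)
      rw [Nat.cast_sub hlt.le, ZMod.natCast_self, zero_sub, DysonLRO.lam_neg] at this
      simpa using this
  have hsr := DysonLRO.sum_rule κ hκn hgd hpos
  have hnn : ∀ l, 0 ≤ DysonLRO.lam κ l := by
    intro l
    unfold DysonLRO.lam
    exact Finset.sum_nonneg fun x _ => mul_nonneg (DysonLRO.kap_nonneg α γ ε hε.le hεγ m x)
      (by linarith [DysonLRO.CC_le_one l x])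
  have hsum : ∑ l ∈ Finset.univ.erase (0 : ZMod (2 * m)),
      (2 * m : ℝ) / (2 * DysonLRO.lam κ l) ≤ 2 * m * m := by
    refine (DysonLRO.sum_erase_le (fun l => (2 * m : ℝ) / (2 * DysonLRO.lam κ l))
      (fun l => div_nonneg (by positivity) (by linarith [hnn l]))
      (fun l => by simp only [DysonLRO.lam_neg])).trans ?_
    have hb : ∀ k ∈ Finset.Icc 1 m, (2 * m : ℝ) / (2 * DysonLRO.lam κ ((k : ℕ) : ZMod (2 * m))) ≤
        (m : ℝ) * (m : ℝ) ^ s * ((1 - s) * (k : ℝ) ^ (-s)) := by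
      intro k hk
      rw [Finset.mem_Icc] at hk
      have hk0 : (0 : ℝ) < k := by exact_mod_cast hk.1
      have h1 := hlam k hk.1 hk.2
      have hp := hlampos k hk.1 hk.2
      have hks : 0 < (k : ℝ) ^ s := by positivity
      have hms : 0 < (m : ℝ) ^ s := by positivity
      rw [Real.div_rpow hk0.le hm0.le] at h1
      rw [Real.rpow_neg hk0.le, mul_div_mul_left _ _ (by norm_num : (2 : ℝ) ≠ 0)]
      calc (m : ℝ) / DysonLRO.lam κ (k : ZMod (2 * m)) ≤
          m / ((k : ℝ) ^ s / (m : ℝ) ^ s / (1 - s)) := by gcongr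
        _ = _ := by field_simp
    have h2 := Finset.sum_le_sum hb
    rw [← Finset.mul_sum] at h2
    have h3 := mul_le_mul_of_nonneg_left
      (DysonLRO.sum_rpow_le s (by rw [hs]; linarith) (by linarith) m)
      (show 0 ≤ (m : ℝ) * (m : ℝ) ^ s by positivity)
    have e : (m : ℝ) ^ s * (m : ℝ) ^ (1 - s) = m := by
      rw [← Real.rpow_add hm0]; simp
    rw [mul_assoc (m : ℝ) _ ((m : ℝ) ^ (1 - s)), e] at h3
    have h4 := h2.trans h3
    linarith
  rw [DysonLRO.sum_corr α γ ε m hm]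
  have hZ := DysonLRO.ZZ_pos (fun j k => κ (j - k)) 0
  have h5 := mul_le_mul_of_nonneg_right hsum hZ.le
  rw [one_div_mul_eq_div, le_div_iff₀ (by positivity), le_div_iff₀ hZ]
  linarith
end
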